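/- (Uniqueness of spherical convex polytopes, planar form; Theorem 1.7(ii).) Let N ≥ 3 be an integer, q₁, …, q_N distinct points of ℝ², α₁, …, α_N ∈ (−1, 0) with Σ_{j=1}^N α_j > −2, and set ρ = 4π(2 + Σ_j α_j). Suppose for i = 1, 2 that u_i : ℝ² ∖ {q₁, …, q_N} → ℝ is C² and satisfies: Δu_i(x) + e^{u_i(x)} = 0 for all x ∈ ℝ² ∖ {q₁, …, q_N}; for each j the function x ↦ u_i(x) − 2α_j ln|x − q_j| extends continuously to q_j; ∫_{ℝ²} e^{u_i(x)} dx = ρ; and u_i(x) + 2 ln(1 + |x|²) converges to a finite limit as |x| → ∞. Then u₁ = u₂ on ℝ² ∖ {q₁, …, q_N}. -/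

import Mathlib

open Real MeasureTheory Metric Filter Topology RealInnerProductSpace

noncomputable section

/-- The plane `ℝ²`. -/
abbrev Pl := EuclideanSpace ℝ (Fin 2)

/-- The Laplacian `Δu = ∂²u/∂x₁² + ∂²u/∂x₂²` of a function on `ℝ²`. -/
def lap (u : Pl → ℝ) (x : Pl) : ℝ :=
  ∑ i : Fin 2, fderiv ℝ (fun y => fderiv ℝ u y (EuclideanSpace.single i 1)) x
    (EuclideanSpace.single i 1)

/-- `u` is a solution of the planar form of the constant curvature equation on the
sphere with `N` conical singularities of orders `al j` (spherical convex polytope)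
and total mass `RHO = 4 pi (2 + sum al)`. -/
def PolySol (N : ℕ) (q : Fin N → Pl) (al : Fin N → ℝ) (ρ : ℝ) (u : Pl → ℝ) : Prop :=
  ContDiffOn ℝ 2 u (Set.range q)ᶜ ∧
  (∀ x ∉ Set.range q, lap u x + Real.exp (u x) = 0) ∧
  (∀ j, ∃ L : ℝ, Tendsto (fun x => u x - 2 * al j * Real.log ‖x - q j‖)
      (𝓝[(Set.range q)ᶜ] (q j)) (nhds L)) ∧
  (∫ x : Pl, Real.exp (u x) = ρ) ∧
  (∃ L : ℝ, Tendsto (fun x => u x + 2 * Real.log (1 + ‖x‖ ^ 2))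
      (Bornology.cobounded Pl) (nhds L))

/-!
For a solution `U` of `ΔU + e^U = 0` on `D`, the plane minus the cone points, the function
`Q_U = ∂∂U - (∂U)² / 2` is holomorphic. Given two solutions, put `m = e^{-(U + V) / 2}` and let
`G` be `m` times the complex conjugate of `∂(U - V)`; then `∂̄G` is `m` times the complex conjugate
of `Q_U - Q_V`. Hence `F = (Q_U - Q_V) G` satisfies `∂̄F = m |Q_U - Q_V|² =: Φ ≥ 0`, and
`|F|² ≤ K Φ` as soon as `m |∂(U - V)|² ≤ K`. Testing `∂̄F = Φ` against the square of a cutoff `η`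
and absorbing `F` into `Φ` bounds `∫ η² Φ` by a multiple of `K ∫ |∇η|²`. As finite sets and the
point at infinity have zero logarithmic capacity, `Φ = 0`, that is `Q_U = Q_V`.

The bound `K` exists because `m = O(|z - q_j|^{-2α_j})` and `∂(U - V) = O(|z - q_j|^{α_j})` at a
cone point, the latter by an interior gradient estimate, while an inversion gives
`∂(U - V) = O(|z|^{-2})` at infinity, where `m = O(|z|⁴)`.

Now `G` is holomorphic on `D`, tends to `0` at each cone point because `α_j < 0`, and is `O(|z|²)`
at infinity. With at least three zeros, such a function vanishes by Liouville's theorem, so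
`∂U = ∂V`, and one more derivative gives `e^U = e^V`.
-/

open Asymptotics
open scoped ComplexConjugate Laplacian

/-! ### Wirtinger derivatives -/

/-- The Wirtinger derivative `∂f/∂z`. -/
def dz (f : ℂ → ℂ) (z : ℂ) : ℂ :=
  (fderiv ℝ f z 1 - Complex.I * fderiv ℝ f z Complex.I) / 2

/-- The Wirtinger derivative `∂f/∂z̄`. -/
def dzbar (f : ℂ → ℂ) (z : ℂ) : ℂ :=
  (fderiv ℝ f z 1 + Complex.I * fderiv ℝ f z Complex.I) / 2

section Wirtinger

variable {f g φ : ℂ → ℂ} {z c : ℂ}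

lemma fderiv_apply_eq_dz_mul_add_dzbar_mul_conj (f : ℂ → ℂ) (z h : ℂ) :
    fderiv ℝ f z h = dz f z * h + dzbar f z * conj h := by
  have h_lin : fderiv ℝ f z h = h.re * fderiv ℝ f z 1 + h.im * fderiv ℝ f z Complex.I := by
    conv_lhs => rw [show h = h.re • (1 : ℂ) + h.im • Complex.I by apply Complex.ext <;> simp,
      map_add, map_smul, map_smul, Complex.real_smul, Complex.real_smul]
  rw [h_lin, dz, dzbar, Complex.re_eq_add_conj, Complex.im_eq_sub_conj]
  field_simp
  linear_combination fderiv ℝ f z Complex.I * (h - conj h) * Complex.I_sq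

lemma norm_dzbar_le_norm_fderiv (f : ℂ → ℂ) (z : ℂ) : ‖dzbar f z‖ ≤ ‖fderiv ℝ f z‖ := by
  have h_one := (fderiv ℝ f z).le_opNorm 1
  have h_I := (fderiv ℝ f z).le_opNorm Complex.I
  have h_add := norm_add_le (fderiv ℝ f z 1) (Complex.I * fderiv ℝ f z Complex.I)
  rw [norm_mul, Complex.norm_I, one_mul] at h_add
  rw [norm_one, mul_one] at h_one
  rw [Complex.norm_I, mul_one] at h_I
  rw [dzbar, norm_div, Complex.norm_ofNat]
  linarith

lemma dz_congr (h : f =ᶠ[𝓝 z] g) : dz f z = dz g z := by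
  simp only [dz, h.fderiv_eq]

lemma dzbar_congr (h : f =ᶠ[𝓝 z] g) : dzbar f z = dzbar g z := by
  simp only [dzbar, h.fderiv_eq]

lemma dzbar_add (hf : DifferentiableAt ℝ f z) (hg : DifferentiableAt ℝ g z) :
    dzbar (fun x ↦ f x + g x) z = dzbar f z + dzbar g z := by
  simp only [dzbar, fderiv_fun_add hf hg, add_apply]
  ring

lemma dz_sub (hf : DifferentiableAt ℝ f z) (hg : DifferentiableAt ℝ g z) :
    dz (fun x ↦ f x - g x) z = dz f z - dz g z := by
  simp only [dz, fderiv_fun_sub hf hg, sub_apply]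
  ring

lemma dzbar_sub (hf : DifferentiableAt ℝ f z) (hg : DifferentiableAt ℝ g z) :
    dzbar (fun x ↦ f x - g x) z = dzbar f z - dzbar g z := by
  simp only [dzbar, fderiv_fun_sub hf hg, sub_apply]
  ring

lemma dz_mul (hf : DifferentiableAt ℝ f z) (hg : DifferentiableAt ℝ g z) :
    dz (fun x ↦ f x * g x) z = dz f z * g z + f z * dz g z := by
  simp only [dz, fderiv_fun_mul hf hg, add_apply, smul_apply, smul_eq_mul]
  ring

lemma dzbar_mul (hf : DifferentiableAt ℝ f z) (hg : DifferentiableAt ℝ g z) :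
    dzbar (fun x ↦ f x * g x) z = dzbar f z * g z + f z * dzbar g z := by
  simp only [dzbar, fderiv_fun_mul hf hg, add_apply, smul_apply, smul_eq_mul]
  ring

lemma dz_const (c z : ℂ) : dz (fun _ ↦ c) z = 0 := by simp [dz]

lemma dzbar_eq_zero (hf : DifferentiableAt ℂ f z) : dzbar f z = 0 := by
  have h_CR := (differentiableAt_complex_iff_differentiableAt_real.1 hf).2
  rw [dzbar, h_CR, smul_eq_mul]
  linear_combination (fderiv ℝ f z 1 / 2) * Complex.I_sq

lemma differentiableAt_of_dzbar_eq_zero (hf : DifferentiableAt ℝ f z) (h : dzbar f z = 0) :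
    DifferentiableAt ℂ f z := by
  refine differentiableAt_complex_iff_differentiableAt_real.2 ⟨hf, ?_⟩
  rw [dzbar] at h
  rw [smul_eq_mul]
  linear_combination (-2 * Complex.I) * h + (fderiv ℝ f z Complex.I) * Complex.I_sq

lemma fderiv_real_apply_of_hasDerivAt (hf : HasDerivAt f c z) (h : ℂ) : fderiv ℝ f z h = c * h := by
  rw [hf.complexToReal_fderiv.fderiv]
  simp

lemma dz_eq_of_hasDerivAt (hf : HasDerivAt f c z) : dz f z = c := by
  rw [dz, fderiv_real_apply_of_hasDerivAt hf, fderiv_real_apply_of_hasDerivAt hf]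
  linear_combination (-c / 2) * Complex.I_sq

lemma fderiv_real_holomorphic_comp (hg : HasDerivAt g c (f z)) (hf : DifferentiableAt ℝ f z)
    (h : ℂ) : fderiv ℝ (fun x ↦ g (f x)) z h = c * fderiv ℝ f z h := by
  rw [show (fun x ↦ g (f x)) = g ∘ f from rfl,
    (hg.complexToReal_fderiv.comp z hf.hasFDerivAt).fderiv]
  simp

lemma dz_holomorphic_comp (hg : HasDerivAt g c (f z)) (hf : DifferentiableAt ℝ f z) :
    dz (fun x ↦ g (f x)) z = c * dz f z := by
  simp only [dz, fderiv_real_holomorphic_comp hg hf]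
  ring

lemma dzbar_holomorphic_comp (hg : HasDerivAt g c (f z)) (hf : DifferentiableAt ℝ f z) :
    dzbar (fun x ↦ g (f x)) z = c * dzbar f z := by
  simp only [dzbar, fderiv_real_holomorphic_comp hg hf]
  ring

lemma fderiv_real_comp_holomorphic (hφ : HasDerivAt φ c z) (hf : DifferentiableAt ℝ f (φ z))
    (h : ℂ) : fderiv ℝ (fun x ↦ f (φ x)) z h = fderiv ℝ f (φ z) (c * h) := by
  rw [show (fun x ↦ f (φ x)) = f ∘ φ from rfl,
    (hf.hasFDerivAt.comp z hφ.complexToReal_fderiv).fderiv]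
  simp

lemma dz_comp_holomorphic (hφ : HasDerivAt φ c z) (hf : DifferentiableAt ℝ f (φ z)) :
    dz (fun x ↦ f (φ x)) z = c * dz f (φ z) := by
  rw [dz]
  simp only [fderiv_real_comp_holomorphic hφ hf, fderiv_apply_eq_dz_mul_add_dzbar_mul_conj f,
    mul_one, map_mul, Complex.conj_I]
  linear_combination (-dz f (φ z) * c / 2 + dzbar f (φ z) * conj c / 2) * Complex.I_sq

lemma dzbar_comp_holomorphic (hφ : HasDerivAt φ c z) (hf : DifferentiableAt ℝ f (φ z)) :
    dzbar (fun x ↦ f (φ x)) z = conj c * dzbar f (φ z) := by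
  rw [dzbar]
  simp only [fderiv_real_comp_holomorphic hφ hf, fderiv_apply_eq_dz_mul_add_dzbar_mul_conj f,
    mul_one, map_mul, Complex.conj_I]
  linear_combination (dz f (φ z) * c / 2 - dzbar f (φ z) * conj c / 2) * Complex.I_sq

lemma dzbar_conj (hf : DifferentiableAt ℝ f z) :
    dzbar (fun x ↦ conj (f x)) z = conj (dz f z) := by
  have h_fderiv : HasFDerivAt (fun x ↦ conj (f x))
      ((Complex.conjCLE : ℂ →L[ℝ] ℂ).comp (fderiv ℝ f z)) z :=
    (Complex.conjCLE : ℂ →L[ℝ] ℂ).hasFDerivAt.comp z hf.hasFDerivAt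
  simp [dzbar, dz, h_fderiv.fderiv, Complex.conj_ofNat]

lemma contDiffAt_dz {n m : WithTop ℕ∞} (hf : ContDiffAt ℝ n f z) (h : m + 1 ≤ n) :
    ContDiffAt ℝ m (dz f) z := by
  have h_fderiv : ContDiffAt ℝ m (fderiv ℝ f) z := hf.fderiv_right h
  exact ((h_fderiv.clm_apply contDiffAt_const).sub
    (contDiffAt_const.mul (h_fderiv.clm_apply contDiffAt_const))).div_const 2

lemma contDiffAt_dzbar {n m : WithTop ℕ∞} (hf : ContDiffAt ℝ n f z) (h : m + 1 ≤ n) :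
    ContDiffAt ℝ m (dzbar f) z := by
  have h_fderiv : ContDiffAt ℝ m (fderiv ℝ f) z := hf.fderiv_right h
  exact ((h_fderiv.clm_apply contDiffAt_const).add
    (contDiffAt_const.mul (h_fderiv.clm_apply contDiffAt_const))).div_const 2

lemma fderiv_dz_apply (hf : ContDiffAt ℝ 2 f z) (h : ℂ) :
    fderiv ℝ (dz f) z h =
      (fderiv ℝ (fderiv ℝ f) z h 1 - Complex.I * fderiv ℝ (fderiv ℝ f) z h Complex.I) / 2 := by
  let L : (ℂ →L[ℝ] ℂ) →L[ℝ] ℂ := (2⁻¹ : ℂ) •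
    (ContinuousLinearMap.apply ℝ ℂ 1 - Complex.I • ContinuousLinearMap.apply ℝ ℂ Complex.I)
  have h_dz : dz f = L ∘ fderiv ℝ f := by
    ext y
    simp [L, dz, div_eq_inv_mul]
  have h_diff : DifferentiableAt ℝ (fderiv ℝ f) z :=
    (hf.fderiv_right (m := 1) le_rfl).differentiableAt one_ne_zero
  rw [h_dz, (L.hasFDerivAt.comp z h_diff.hasFDerivAt).fderiv]
  simp [L, div_eq_inv_mul]

lemma fderiv_dzbar_apply (hf : ContDiffAt ℝ 2 f z) (h : ℂ) :
    fderiv ℝ (dzbar f) z h =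
      (fderiv ℝ (fderiv ℝ f) z h 1 + Complex.I * fderiv ℝ (fderiv ℝ f) z h Complex.I) / 2 := by
  let L : (ℂ →L[ℝ] ℂ) →L[ℝ] ℂ := (2⁻¹ : ℂ) •
    (ContinuousLinearMap.apply ℝ ℂ 1 + Complex.I • ContinuousLinearMap.apply ℝ ℂ Complex.I)
  have h_dzbar : dzbar f = L ∘ fderiv ℝ f := by
    ext y
    simp [L, dzbar, div_eq_inv_mul, mul_add]
  have h_diff : DifferentiableAt ℝ (fderiv ℝ f) z :=
    (hf.fderiv_right (m := 1) le_rfl).differentiableAt one_ne_zero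
  rw [h_dzbar, (L.hasFDerivAt.comp z h_diff.hasFDerivAt).fderiv]
  simp [L, div_eq_inv_mul, mul_add]

lemma dzbar_dz_comm (hf : ContDiffAt ℝ 2 f z) : dzbar (dz f) z = dz (dzbar f) z := by
  have h_symm : IsSymmSndFDerivAt ℝ f z := hf.isSymmSndFDerivAt (by simp)
  rw [dzbar, dz, fderiv_dz_apply hf, fderiv_dz_apply hf, fderiv_dzbar_apply hf,
    fderiv_dzbar_apply hf, h_symm.eq 1 Complex.I]
  ring

lemma dzbar_dz_eq_laplacian_div_four (hf : ContDiffAt ℝ 2 f z) :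
    dzbar (dz f) z = Δ f z / 4 := by
  have h_symm : IsSymmSndFDerivAt ℝ f z := hf.isSymmSndFDerivAt (by simp)
  rw [dzbar, fderiv_dz_apply hf, fderiv_dz_apply hf, h_symm.eq 1 Complex.I,
    InnerProductSpace.laplacian_eq_iteratedFDeriv_complexPlane]
  simp only [iteratedFDeriv_two_apply, Matrix.cons_val_zero, Matrix.cons_val_one]
  linear_combination (-(fderiv ℝ (fderiv ℝ f) z Complex.I Complex.I) / 4) * Complex.I_sq

lemma dzbar_dz_comp_holomorphic {φ' : ℂ → ℂ} (hφ : ∀ᶠ x in 𝓝 z, HasDerivAt φ (φ' x) x)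
    (hf : ContDiffAt ℝ 2 f (φ z)) :
    dzbar (dz fun x ↦ f (φ x)) z = φ' z * conj (φ' z) * dzbar (dz f) (φ z) := by
  have hφ_z := hφ.self_of_nhds
  have hφ' : DifferentiableAt ℂ φ' z := by
    have hφ_an : AnalyticAt ℂ φ z :=
      Complex.analyticAt_iff_eventually_differentiableAt.2 (hφ.mono fun x hx ↦ hx.differentiableAt)
    exact hφ_an.deriv.differentiableAt.congr_of_eventuallyEq (hφ.mono fun x hx ↦ hx.deriv.symm)
  have h_dz : DifferentiableAt ℝ (dz f) (φ z) :=
    (contDiffAt_dz (m := 1) hf le_rfl).differentiableAt one_ne_zero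
  have h_dz_comp : DifferentiableAt ℝ (fun x ↦ dz f (φ x)) z :=
    h_dz.comp z (hφ_z.differentiableAt.restrictScalars ℝ)
  have h_eq : dz (fun x ↦ f (φ x)) =ᶠ[𝓝 z] fun x ↦ φ' x * dz f (φ x) := by
    filter_upwards [hφ, hφ_z.continuousAt.eventually (hf.eventually (by simp))] with x hx hfx
    exact dz_comp_holomorphic hx (hfx.differentiableAt two_ne_zero)
  rw [dzbar_congr h_eq, dzbar_mul (hφ'.restrictScalars ℝ) h_dz_comp,
    dzbar_eq_zero hφ', dzbar_comp_holomorphic hφ_z h_dz]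
  ring

end Wirtinger

/-! ### The Cauchy–Pompeiu formula -/

lemma tsupport_dz_subset (φ : ℂ → ℂ) : tsupport (dz φ) ⊆ tsupport φ :=
  closure_minimal (fun z hz ↦ by_contra fun h ↦ hz (by simp [dz, fderiv_of_notMem_tsupport ℝ h]))
    (isClosed_tsupport φ)

lemma hasCompactSupport_dz {φ : ℂ → ℂ} (hφ : HasCompactSupport φ) :
    HasCompactSupport (dz φ) :=
  hφ.of_isClosed_subset (isClosed_tsupport _) (tsupport_dz_subset φ)

lemma tsupport_dzbar_subset (φ : ℂ → ℂ) : tsupport (dzbar φ) ⊆ tsupport φ :=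
  closure_minimal (fun z hz ↦ by_contra fun h ↦ hz (by simp [dzbar, fderiv_of_notMem_tsupport ℝ h]))
    (isClosed_tsupport φ)

lemma hasCompactSupport_dzbar {φ : ℂ → ℂ} (hφ : HasCompactSupport φ) :
    HasCompactSupport (dzbar φ) :=
  hφ.of_isClosed_subset (isClosed_tsupport _) (tsupport_dzbar_subset φ)

lemma integrable_fderiv_apply {E F : Type*} [NormedAddCommGroup E] [NormedSpace ℝ E]
    [MeasurableSpace E] [BorelSpace E] [NormedAddCommGroup F] [NormedSpace ℝ F]
    {μ : Measure E} [IsFiniteMeasureOnCompacts μ]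
    {φ : E → F} (hφ : ContDiff ℝ 1 φ) (hc : HasCompactSupport φ) (v : E) :
    Integrable (fun z ↦ fderiv ℝ φ z v) μ :=
  ((hφ.continuous_fderiv one_ne_zero).clm_apply continuous_const).integrable_of_hasCompactSupport
    (hc.fderiv_apply ℝ v)

lemma integral_fderiv_apply_eq_zero {E F : Type*} [NormedAddCommGroup E] [NormedSpace ℝ E]
    [FiniteDimensional ℝ E] [MeasurableSpace E] [BorelSpace E] [NormedAddCommGroup F]
    [NormedSpace ℝ F] {μ : Measure E} [μ.IsAddHaarMeasure] {φ : E → F} (hφ : ContDiff ℝ 1 φ)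
    (hc : HasCompactSupport φ) (v : E) : ∫ z, fderiv ℝ φ z v ∂μ = 0 := by
  have h_parts := integral_smul_fderiv_eq_neg_fderiv_smul_of_integrable (μ := μ) (v := v)
    (f := fun _ : E ↦ (1 : ℝ)) (g := φ) (by simp)
    (by simpa using integrable_fderiv_apply hφ hc v)
    (by simpa using hφ.continuous.integrable_of_hasCompactSupport hc)
    (fun _ _ ↦ differentiableAt_const _) fun x _ ↦ hφ.differentiable one_ne_zero x
  simpa using h_parts

section Pompeiu

variable {φ : ℂ → ℂ}

lemma integral_dz_eq_zero (hφ : ContDiff ℝ 1 φ) (hc : HasCompactSupport φ) :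
    ∫ z, dz φ z = 0 := by
  simp only [dz]
  rw [integral_div, integral_sub (integrable_fderiv_apply hφ hc 1)
    ((integrable_fderiv_apply hφ hc Complex.I).const_mul _), integral_const_mul,
    integral_fderiv_apply_eq_zero hφ hc, integral_fderiv_apply_eq_zero hφ hc]
  simp

lemma integral_dzbar_eq_zero (hφ : ContDiff ℝ 1 φ) (hc : HasCompactSupport φ) :
    ∫ z, dzbar φ z = 0 := by
  simp only [dzbar]
  rw [integral_div, integral_add (integrable_fderiv_apply hφ hc 1)
    ((integrable_fderiv_apply hφ hc Complex.I).const_mul _), integral_const_mul,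
    integral_fderiv_apply_eq_zero hφ hc, integral_fderiv_apply_eq_zero hφ hc]
  simp

lemma integral_Ioi_fderiv_ray {E F : Type*} [NormedAddCommGroup E] [NormedSpace ℝ E]
    [NormedAddCommGroup F] [NormedSpace ℝ F] [CompleteSpace F] {φ : E → F} (hφ : ContDiff ℝ 1 φ)
    (hc : HasCompactSupport φ) {v : E} (hv : v ≠ 0) :
    ∫ r in Set.Ioi (0 : ℝ), fderiv ℝ φ (r • v) v = -φ 0 := by
  have h_deriv (r : ℝ) : deriv (fun r : ℝ ↦ φ (r • v)) r = fderiv ℝ φ (r • v) v := by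
    have h_ray : HasDerivAt (fun r : ℝ ↦ r • v) v r := by
      simpa using (hasDerivAt_id r).smul_const v
    exact ((hφ.differentiable one_ne_zero _).hasFDerivAt.comp_hasDerivAt r h_ray).deriv
  have h_int := HasCompactSupport.integral_Ioi_deriv_eq (f := fun r : ℝ ↦ φ (r • v))
    (hφ.comp (contDiff_id.smul contDiff_const))
    (hc.comp_isClosedEmbedding (isClosedEmbedding_smul_left hv)) 0
  simpa only [h_deriv, zero_smul] using h_int

lemma integral_fderiv_circle {F : Type*} [NormedAddCommGroup F] [NormedSpace ℝ F]
    [CompleteSpace F] {φ : ℂ → F} (hφ : ContDiff ℝ 1 φ) (r : ℝ) :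
    ∫ t in -π..π, fderiv ℝ φ (circleMap 0 r t) (circleMap 0 r t * Complex.I) = 0 := by
  have h_deriv (t : ℝ) : HasDerivAt (fun t ↦ φ (circleMap 0 r t))
      (fderiv ℝ φ (circleMap 0 r t) (circleMap 0 r t * Complex.I)) t :=
    (hφ.differentiable one_ne_zero _).hasFDerivAt.comp_hasDerivAt t (hasDerivAt_circleMap 0 r t)
  have h_cont : Continuous fun t ↦
      fderiv ℝ φ (circleMap 0 r t) (circleMap 0 r t * Complex.I) :=
    ((hφ.continuous_fderiv one_ne_zero).comp (continuous_circleMap 0 r)).clm_apply (by fun_prop)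
  rw [intervalIntegral.integral_eq_sub_of_hasDerivAt (fun t _ ↦ h_deriv t)
    (h_cont.intervalIntegrable _ _)]
  simp [circleMap_zero, Complex.exp_neg, Complex.exp_pi_mul_I]

lemma integrableOn_fderiv_polar (hφ : ContDiff ℝ 1 φ) (hc : HasCompactSupport φ) (c : ℂ) :
    IntegrableOn (fun p : ℝ × ℝ ↦ fderiv ℝ φ (circleMap 0 p.1 p.2) (circleMap 0 1 p.2 * c))
      (Set.Ioi (0 : ℝ) ×ˢ Set.Ioo (-π) π) := by
  have h_circle : Continuous fun p : ℝ × ℝ ↦ circleMap 0 p.1 p.2 := by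
    simp only [circleMap]
    fun_prop
  have h_cont : Continuous fun p : ℝ × ℝ ↦
      fderiv ℝ φ (circleMap 0 p.1 p.2) (circleMap 0 1 p.2 * c) :=
    ((hφ.continuous_fderiv one_ne_zero).comp h_circle).clm_apply (by fun_prop)
  obtain ⟨R, -, hR⟩ := (hc.fderiv ℝ).isCompact.isBounded.exists_pos_norm_le
  refine (h_cont.continuousOn.integrableOn_compact ((isCompact_Icc (a := 0) (b := R)).prod
    (isCompact_Icc (a := -π) (b := π)))).of_forall_sdiff_eq_zero
    (measurableSet_Ioi.prod measurableSet_Ioo) ?_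
  rintro ⟨r, t⟩ ⟨⟨hr, ht⟩, h_notMem⟩
  have hRr : R < r := not_le.1 fun hrR ↦ h_notMem ⟨⟨le_of_lt hr, hrR⟩, ⟨ht.1.le, ht.2.le⟩⟩
  have h_zero : fderiv ℝ φ (circleMap 0 r t) = 0 := by
    refine image_eq_zero_of_notMem_tsupport fun h_mem ↦ (hR _ h_mem).not_gt (hRr.trans_le ?_)
    simpa using le_abs_self r
  simp [h_zero]

lemma integral_fderiv_radial_polar (hφ : ContDiff ℝ 1 φ) (hc : HasCompactSupport φ) :
    ∫ p in Set.Ioi (0 : ℝ) ×ˢ Set.Ioo (-π) π,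
      fderiv ℝ φ (circleMap 0 p.1 p.2) (circleMap 0 1 p.2) = -(2 * π) * φ 0 := by
  have h_ray (t : ℝ) :
      ∫ r in Set.Ioi (0 : ℝ), fderiv ℝ φ (circleMap 0 r t) (circleMap 0 1 t) = -φ 0 := by
    rw [← integral_Ioi_fderiv_ray hφ hc (circleMap_ne_center one_ne_zero : circleMap 0 1 t ≠ 0)]
    simp [circleMap_zero]
  have h_int := integrableOn_fderiv_polar hφ hc 1
  simp only [mul_one] at h_int
  rw [Measure.volume_eq_prod] at h_int ⊢
  have h_swap : IntegrableOn (fun p : ℝ × ℝ ↦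
      fderiv ℝ φ (circleMap 0 p.2 p.1) (circleMap 0 1 p.1))
      (Set.Ioo (-π) π ×ˢ Set.Ioi (0 : ℝ)) (volume.prod volume) := h_int.swap
  rw [← setIntegral_prod_swap]
  simp only [Prod.fst_swap, Prod.snd_swap]
  rw [setIntegral_prod _ h_swap]
  simp only [h_ray, setIntegral_const, Measure.real, Real.volume_Ioo]
  rw [ENNReal.toReal_ofReal (by linarith [pi_pos]), Complex.real_smul]
  push_cast
  ring

lemma integral_fderiv_angular_polar (hφ : ContDiff ℝ 1 φ) (hc : HasCompactSupport φ) :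
    ∫ p in Set.Ioi (0 : ℝ) ×ˢ Set.Ioo (-π) π,
      fderiv ℝ φ (circleMap 0 p.1 p.2) (circleMap 0 1 p.2 * Complex.I) = 0 := by
  have h_int := integrableOn_fderiv_polar hφ hc Complex.I
  rw [Measure.volume_eq_prod] at h_int ⊢
  rw [setIntegral_prod _ h_int]
  refine setIntegral_eq_zero_of_forall_eq_zero fun r hr ↦ ?_
  have h_scale (t : ℝ) : r • fderiv ℝ φ (circleMap 0 r t) (circleMap 0 1 t * Complex.I) =
      fderiv ℝ φ (circleMap 0 r t) (circleMap 0 r t * Complex.I) := by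
    rw [← map_smul]
    simp [circleMap_zero, mul_assoc]
  refine (smul_eq_zero.1 ?_).resolve_left (Set.mem_Ioi.1 hr).ne'
  rw [← integral_Ioc_eq_integral_Ioo, ← intervalIntegral.integral_of_le (by linarith [pi_pos]),
    ← intervalIntegral.integral_smul]
  simpa only [h_scale] using integral_fderiv_circle hφ r

lemma smul_dzbar_mul_inv_polar {r : ℝ} (hr : r ≠ 0) (t : ℝ) :
    r • (dzbar φ (circleMap 0 r t) * (circleMap 0 r t)⁻¹) =
      (fderiv ℝ φ (circleMap 0 r t) (circleMap 0 1 t) +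
        Complex.I * fderiv ℝ φ (circleMap 0 r t) (circleMap 0 1 t * Complex.I)) / 2 := by
  have hr' : (r : ℂ) ≠ 0 := by exact_mod_cast hr
  have h_scale : circleMap 0 r t = r * circleMap 0 1 t := by simp [circleMap_zero]
  have h_ne : circleMap 0 1 t ≠ 0 := circleMap_ne_center one_ne_zero
  have h_conj : conj (circleMap 0 1 t) = (circleMap 0 1 t)⁻¹ := by
    rw [Complex.inv_def, Complex.normSq_eq_norm_sq]
    simp
  simp only [fderiv_apply_eq_dz_mul_add_dzbar_mul_conj φ, map_mul, Complex.conj_I, h_conj,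
    Complex.real_smul]
  generalize dz φ (circleMap 0 r t) = a
  generalize dzbar φ (circleMap 0 r t) = b
  rw [h_scale]
  field_simp
  linear_combination (b - a * circleMap 0 1 t ^ 2) * Complex.I_sq

lemma integral_dzbar_mul_inv (hφ : ContDiff ℝ 1 φ) (hc : HasCompactSupport φ) :
    ∫ ζ, dzbar φ ζ * ζ⁻¹ = -π * φ 0 := by
  have h_polar : ∫ p in polarCoord.target, p.1 • (dzbar φ (Complex.polarCoord.symm p) *
      (Complex.polarCoord.symm p)⁻¹) = ∫ p in Set.Ioi (0 : ℝ) ×ˢ Set.Ioo (-π) π,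
        (fderiv ℝ φ (circleMap 0 p.1 p.2) (circleMap 0 1 p.2) + Complex.I *
          fderiv ℝ φ (circleMap 0 p.1 p.2) (circleMap 0 1 p.2 * Complex.I)) / 2 := by
    refine setIntegral_congr_fun (measurableSet_Ioi.prod measurableSet_Ioo) fun p hp ↦ ?_
    have h_symm : Complex.polarCoord.symm p = circleMap 0 p.1 p.2 := by
      rw [Complex.polarCoord_symm_apply, circleMap_zero, Complex.exp_mul_I]
      push_cast
      rfl
    simp only [h_symm]
    exact smul_dzbar_mul_inv_polar hp.1.ne' p.2
  have h_radial := integrableOn_fderiv_polar hφ hc 1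
  simp only [mul_one] at h_radial
  rw [← Complex.integral_comp_polarCoord_symm, h_polar, integral_div,
    integral_add h_radial ((integrableOn_fderiv_polar hφ hc Complex.I).const_mul _),
    integral_const_mul, integral_fderiv_radial_polar hφ hc, integral_fderiv_angular_polar hφ hc]
  ring

theorem integral_dzbar_mul_inv_sub (hφ : ContDiff ℝ 1 φ) (hc : HasCompactSupport φ) (z : ℂ) :
    ∫ ζ, dzbar φ ζ * (ζ - z)⁻¹ = -π * φ z := by
  have h_zero := integral_dzbar_mul_inv (φ := fun x ↦ φ (x + z))
    (hφ.comp (contDiff_id.add contDiff_const)) (hc.comp_homeomorph (Homeomorph.addRight z))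
  rw [zero_add] at h_zero
  rw [← h_zero, ← integral_add_right_eq_self _ z]
  simp only [add_sub_cancel_right, dzbar, fderiv_comp_add_right]

end Pompeiu

/-! ### The Cauchy transform and `∂̄`-regularity -/

lemma locallyIntegrable_norm_rpow_neg {a : ℝ} (ha : a < 2) :
    LocallyIntegrable fun z : ℂ ↦ ‖z‖ ^ (-a) := by
  refine locallyIntegrable_of_norm_le_rpow (C := 1) (α := a) (by simp) (by simpa using ha) ?_
    (measurable_norm.pow_const (-a)).aestronglyMeasurable
  filter_upwards with z
  rw [one_mul, Real.norm_of_nonneg (by positivity)]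

lemma locallyIntegrable_inv_complex : LocallyIntegrable fun z : ℂ ↦ z⁻¹ := by
  refine (locallyIntegrable_norm_rpow_neg one_lt_two).mono
    (measurable_inv (G := ℂ)).aestronglyMeasurable (Eventually.of_forall fun z ↦ ?_)
  rw [norm_inv, Real.rpow_neg_one, norm_inv, norm_norm]

/-- The Cauchy transform `π⁻¹ ∫ g(ζ) / (z - ζ)`, the fundamental solution `(π z)⁻¹` of `∂̄`
convolved with `g`. -/
def cauchyTransform (g : ℂ → ℂ) (z : ℂ) : ℂ :=
  (π : ℂ)⁻¹ * convolution (fun z : ℂ ↦ z⁻¹) g (ContinuousLinearMap.mul ℝ ℂ) volume z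

section CauchyTransform

variable {g : ℂ → ℂ}

lemma contDiff_cauchyTransform {n : ℕ∞} (hg : ContDiff ℝ n g) (hc : HasCompactSupport g) :
    ContDiff ℝ n (cauchyTransform g) :=
  contDiff_const.mul (hc.contDiff_convolution_right _ locallyIntegrable_inv_complex hg)

lemma integrable_inv_mul_comp_sub_left {k : ℂ → ℂ} (hk : Continuous k) (hc : HasCompactSupport k)
    (z : ℂ) : Integrable fun t ↦ t⁻¹ * k (z - t) :=
  hc.convolutionExists_right (ContinuousLinearMap.mul ℝ ℂ) locallyIntegrable_inv_complex hk z

lemma fderiv_cauchyTransform_apply (hg : ContDiff ℝ 1 g) (hc : HasCompactSupport g) (z h : ℂ) :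
    fderiv ℝ (cauchyTransform g) z h = (π : ℂ)⁻¹ * ∫ t, t⁻¹ * fderiv ℝ g (z - t) h := by
  have h_conv := hc.hasFDerivAt_convolution_right (ContinuousLinearMap.mul ℝ ℂ)
    locallyIntegrable_inv_complex hg z
  have h_int : Integrable fun t : ℂ ↦
      ((ContinuousLinearMap.mul ℝ ℂ).precompR ℂ) t⁻¹ (fderiv ℝ g (z - t)) :=
    (hc.fderiv ℝ).convolutionExists_right _ locallyIntegrable_inv_complex
      (hg.continuous_fderiv one_ne_zero) z
  have h_fderiv : fderiv ℝ (cauchyTransform g) z = _ := (h_conv.const_mul (π : ℂ)⁻¹).fderiv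
  rw [h_fderiv, smul_apply, convolution, ContinuousLinearMap.integral_apply h_int]
  simp

theorem dzbar_cauchyTransform (hg : ContDiff ℝ 1 g) (hc : HasCompactSupport g) (z : ℂ) :
    dzbar (cauchyTransform g) z = g z := by
  have h_int (h : ℂ) : Integrable fun t ↦ t⁻¹ * fderiv ℝ g (z - t) h :=
    integrable_inv_mul_comp_sub_left
      ((hg.continuous_fderiv one_ne_zero).clm_apply continuous_const) (hc.fderiv_apply ℝ h) z
  have h_dzbar : dzbar (cauchyTransform g) z = (π : ℂ)⁻¹ * ∫ t, t⁻¹ * dzbar g (z - t) := by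
    simp only [dzbar, fderiv_cauchyTransform_apply hg hc]
    rw [mul_left_comm, ← mul_add, mul_div_assoc, ← integral_const_mul,
      ← integral_add (h_int 1) ((h_int Complex.I).const_mul _), ← integral_div]
    congr 2
    ext t
    ring
  have h_pompeiu : ∫ t, t⁻¹ * dzbar g (z - t) = π * g z := by
    rw [← integral_sub_left_eq_self _ volume z, ← neg_neg (∫ t, _), ← integral_neg,
      ← neg_neg (π * g z), ← neg_mul, ← integral_dzbar_mul_inv_sub hg hc z]
    congr 2
    ext ζ
    rw [sub_sub_cancel, ← neg_sub ζ z, inv_neg]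
    ring
  rw [h_dzbar, h_pompeiu, inv_mul_cancel_left₀ (by exact_mod_cast pi_ne_zero)]

end CauchyTransform

lemma contDiff_of_forall_mem_tsupport {𝕜 E F : Type*} [NontriviallyNormedField 𝕜]
    [NormedAddCommGroup E] [NormedSpace 𝕜 E] [NormedAddCommGroup F] [NormedSpace 𝕜 F]
    {φ : E → F} {n : WithTop ℕ∞} (h : ∀ z ∈ tsupport φ, ContDiffAt 𝕜 n φ z) :
    ContDiff 𝕜 n φ := by
  refine contDiff_iff_contDiffAt.2 fun z ↦ ?_
  by_cases hz : z ∈ tsupport φ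
  · exact h z hz
  · exact contDiffAt_const.congr_of_eventuallyEq (notMem_tsupport_iff_eventuallyEq.1 hz)

theorem contDiffAt_of_dzbar_eq {U : Set ℂ} (hU : IsOpen U) {n : ℕ∞} (hn : 1 ≤ n) {F h : ℂ → ℂ}
    (hF : ∀ z ∈ U, DifferentiableAt ℝ F z) (hh : ∀ z ∈ U, ContDiffAt ℝ n h z)
    (hFh : ∀ z ∈ U, dzbar F z = h z) {z : ℂ} (hz : z ∈ U) : ContDiffAt ℝ n F z := by
  obtain ⟨χ, hχU⟩ : ∃ χ : ContDiffBump z, closedBall z χ.rOut ⊆ U := by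
    obtain ⟨r, hr, hrU⟩ := nhds_basis_closedBall.mem_iff.1 (hU.mem_nhds hz)
    exact ⟨⟨r / 2, r, half_pos hr, half_lt_self hr⟩, hrU⟩
  set g : ℂ → ℂ := fun x ↦ χ x • h x with hg_def
  have hg_tsupport : tsupport g ⊆ tsupport χ := tsupport_smul_subset_left χ h
  have hg_supp : HasCompactSupport g := χ.hasCompactSupport.smul_right
  have hg : ContDiff ℝ n g := contDiff_of_forall_mem_tsupport fun x hx ↦
    χ.contDiffAt.smul (hh x (hχU (χ.tsupport_eq ▸ hg_tsupport hx)))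
  have hT := contDiff_cauchyTransform hg hg_supp
  have h_holo : ∀ x ∈ ball z χ.rIn, DifferentiableAt ℂ (F - cauchyTransform g) x := by
    intro x hx
    have hxU : x ∈ U :=
      hχU (ball_subset_closedBall.trans (closedBall_subset_closedBall χ.rIn_lt_rOut.le) hx)
    have hTx : DifferentiableAt ℝ (cauchyTransform g) x :=
      (hT.of_le (by exact_mod_cast hn)).differentiable one_ne_zero x
    refine differentiableAt_of_dzbar_eq_zero ((hF x hxU).sub hTx) ?_
    rw [show F - cauchyTransform g = fun x ↦ F x - cauchyTransform g x from rfl,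
      dzbar_sub (hF x hxU) hTx,
      dzbar_cauchyTransform (hg.of_le (by exact_mod_cast hn)) hg_supp, hFh x hxU, hg_def]
    simp [χ.one_of_mem_closedBall (ball_subset_closedBall hx)]
  have h_sub : ContDiffAt ℝ n (F - cauchyTransform g) z :=
    ((DifferentiableOn.analyticAt (fun x hx ↦ (h_holo x hx).differentiableWithinAt)
      (ball_mem_nhds z χ.rIn_pos)).contDiffAt).restrict_scalars ℝ
  simpa using h_sub.add hT.contDiffAt

/-! ### Gradient estimate at an isolated singularity -/

lemma contDiff_dz {f : ℂ → ℂ} {n m : WithTop ℕ∞} (hf : ContDiff ℝ n f) (h : m + 1 ≤ n) :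
    ContDiff ℝ m (dz f) :=
  contDiff_iff_contDiffAt.2 fun _ ↦ contDiffAt_dz hf.contDiffAt h

lemma contDiff_dzbar {f : ℂ → ℂ} {n m : WithTop ℕ∞} (hf : ContDiff ℝ n f) (h : m + 1 ≤ n) :
    ContDiff ℝ m (dzbar f) :=
  contDiff_iff_contDiffAt.2 fun _ ↦ contDiffAt_dzbar hf.contDiffAt h

lemma integrable_mul_of_continuousAt_tsupport {f g : ℂ → ℂ} (hg : Continuous g)
    (hc : HasCompactSupport g) (hf : ∀ z ∈ tsupport g, ContinuousAt f z) :
    Integrable fun z ↦ f z * g z := by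
  refine Continuous.integrable_of_hasCompactSupport ?_ hc.mul_left
  exact continuous_of_tsupport fun z hz ↦
    (hf z (tsupport_mul_subset_right hz)).mul hg.continuousAt

lemma integrable_mul_inv_sub {g : ℂ → ℂ} (hg : Continuous g) (hc : HasCompactSupport g) (z : ℂ) :
    Integrable fun ζ ↦ g ζ * (ζ - z)⁻¹ := by
  have h_int := (integrable_inv_mul_comp_sub_left hg hc z).comp_sub_left z
  refine h_int.neg.congr (Eventually.of_forall fun ζ ↦ ?_)
  rw [Pi.neg_apply, sub_sub_cancel, ← neg_sub ζ z, inv_neg]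
  ring

lemma contDiff_dzbar_mul_inv_sub {κ : ℂ → ℂ} {z₀ : ℂ} (hκ : ContDiff ℝ 2 κ)
    (hz₀ : z₀ ∉ tsupport (dzbar κ)) : ContDiff ℝ 1 fun ζ ↦ dzbar κ ζ * (ζ - z₀)⁻¹ := by
  refine contDiff_of_forall_mem_tsupport fun ζ hζ ↦ ?_
  have h_ne : ζ - z₀ ≠ 0 :=
    sub_ne_zero.2 fun h ↦ hz₀ (h ▸ tsupport_mul_subset_left hζ)
  exact (contDiff_dzbar hκ one_add_one_eq_two.le).contDiffAt.mul
    ((contDiffAt_id.sub contDiffAt_const).inv h_ne)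

lemma integral_mul_dz_eq_neg {u w : ℂ → ℂ} (hu : ContDiff ℝ 1 u) (hc : HasCompactSupport u)
    (hw : ∀ z ∈ tsupport u, ContDiffAt ℝ 1 w z) :
    ∫ z, w z * dz u z = -∫ z, dz w z * u z := by
  have h_prod : ContDiff ℝ 1 fun z ↦ w z * u z := contDiff_of_forall_mem_tsupport fun z hz ↦
    (hw z (tsupport_mul_subset_right hz)).mul hu.contDiffAt
  have h_leibniz (z : ℂ) : dz (fun ξ ↦ w ξ * u ξ) z = dz w z * u z + w z * dz u z := by
    by_cases hz : z ∈ tsupport u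
    · exact dz_mul ((hw z hz).differentiableAt one_ne_zero) (hu.differentiable one_ne_zero z)
    · rw [image_eq_zero_of_notMem_tsupport fun h ↦ hz (tsupport_mul_subset_right
          (tsupport_dz_subset _ h)),
        image_eq_zero_of_notMem_tsupport fun h ↦ hz (tsupport_dz_subset u h),
        image_eq_zero_of_notMem_tsupport hz]
      ring
  have h_int_left := integrable_mul_of_continuousAt_tsupport (f := dz w) hu.continuous hc
    fun z hz ↦ (contDiffAt_dz (hw z hz) (zero_add 1).le).continuousAt
  have h_int_right := integrable_mul_of_continuousAt_tsupport (f := w)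
    (contDiff_dz hu (zero_add 1).le).continuous
    (hasCompactSupport_dz hc)
    fun z hz ↦ (hw z (tsupport_dz_subset u hz)).continuousAt
  have h_zero := integral_dz_eq_zero h_prod hc.mul_left
  simp only [h_leibniz] at h_zero
  rw [integral_add h_int_left h_int_right] at h_zero
  linear_combination h_zero

theorem pi_mul_dz_eq_integral_sub_integral {κ w : ℂ → ℂ} {z₀ : ℂ} (hκ : ContDiff ℝ 2 κ)
    (hc : HasCompactSupport κ) (hw : ∀ z ∈ tsupport κ, ContDiffAt ℝ 2 w z)
    (hz₀ : z₀ ∉ tsupport (dzbar κ)) (hκ₀ : κ z₀ = 1) :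
    π * dz w z₀ = (∫ ζ, w ζ * dz (fun ξ ↦ dzbar κ ξ * (ξ - z₀)⁻¹) ζ) -
      ∫ ζ, κ ζ * dzbar (dz w) ζ * (ζ - z₀)⁻¹ := by
  have hu := contDiff_dzbar_mul_inv_sub hκ hz₀
  have hu_tsupport : tsupport (fun ζ ↦ dzbar κ ζ * (ζ - z₀)⁻¹) ⊆ tsupport κ :=
    tsupport_mul_subset_left.trans (tsupport_dzbar_subset κ)
  have hu_supp := hc.of_isClosed_subset (isClosed_tsupport _) hu_tsupport
  have hdw : ∀ ζ ∈ tsupport κ, ContDiffAt ℝ 1 (dz w) ζ := fun ζ hζ ↦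
    contDiffAt_dz (hw ζ hζ) one_add_one_eq_two.le
  have hφ : ContDiff ℝ 1 fun ζ ↦ κ ζ * dz w ζ := contDiff_of_forall_mem_tsupport fun ζ hζ ↦
    (hκ.contDiffAt.of_le one_le_two).mul (hdw ζ (tsupport_mul_subset_left hζ))
  have h_leibniz (ζ : ℂ) : κ ζ * dzbar (dz w) ζ * (ζ - z₀)⁻¹ =
      dzbar (fun ξ ↦ κ ξ * dz w ξ) ζ * (ζ - z₀)⁻¹ - dz w ζ * (dzbar κ ζ * (ζ - z₀)⁻¹) := by
    by_cases hζ : ζ ∈ tsupport κ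
    · rw [dzbar_mul (hκ.differentiable two_ne_zero ζ) ((hdw ζ hζ).differentiableAt one_ne_zero)]
      ring
    · rw [image_eq_zero_of_notMem_tsupport hζ,
        image_eq_zero_of_notMem_tsupport fun h ↦ hζ (tsupport_dzbar_subset κ h),
        image_eq_zero_of_notMem_tsupport fun h ↦ hζ (tsupport_mul_subset_left
          (tsupport_dzbar_subset _ h))]
      ring
  have h_int := integrable_mul_inv_sub (contDiff_dzbar hφ (zero_add 1).le).continuous
    (hasCompactSupport_dzbar hc.mul_right) z₀
  have h_int' := integrable_mul_of_continuousAt_tsupport (f := dz w) hu.continuous hu_supp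
    fun ζ hζ ↦ (hdw ζ (hu_tsupport hζ)).continuousAt
  simp only [h_leibniz]
  rw [integral_sub h_int h_int', integral_dzbar_mul_inv_sub hφ hc.mul_right, hκ₀,
    integral_mul_dz_eq_neg hu hu_supp fun ζ hζ ↦ (hw ζ (hu_tsupport hζ)).of_le one_le_two]
  ring

/-- The smooth cutoff equal to `1` for `‖z - p‖ ≤ ρ` and to `0` for `‖z - p‖ ≥ 2 ρ`, obtained by
rescaling a fixed bump function so that its derivatives obey bounds uniform in `ρ`. -/
def diskCutoff (p : ℂ) (ρ : ℝ) (z : ℂ) : ℝ :=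
  (⟨1, 2, one_pos, one_lt_two⟩ : ContDiffBump (0 : ℂ)) ((ρ : ℂ)⁻¹ * (z - p))

section DiskCutoff

variable {p z : ℂ} {ρ : ℝ}

lemma contDiff_diskCutoff {n : ℕ∞} : ContDiff ℝ n (diskCutoff p ρ) :=
  (ContDiffBump.contDiff _).comp (contDiff_const.mul (contDiff_id.sub contDiff_const))

lemma diskCutoff_eq_one (hρ : 0 < ρ) (hz : ‖z - p‖ ≤ ρ) : diskCutoff p ρ z = 1 := by
  refine ContDiffBump.one_of_mem_closedBall _ ?_
  rw [mem_closedBall_zero_iff, norm_mul, norm_inv, Complex.norm_of_nonneg hρ.le]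
  exact inv_mul_le_one_of_le₀ hz hρ.le

lemma diskCutoff_eq_zero (hρ : 0 < ρ) (hz : 2 * ρ ≤ ‖z - p‖) : diskCutoff p ρ z = 0 := by
  refine ContDiffBump.zero_of_le_dist _ ?_
  rw [dist_zero_right, norm_mul, norm_inv, Complex.norm_of_nonneg hρ.le, inv_mul_eq_div]
  exact (le_div_iff₀ hρ).2 hz

lemma diskCutoff_nonneg : 0 ≤ diskCutoff p ρ z := ContDiffBump.nonneg _

lemma diskCutoff_le_one : diskCutoff p ρ z ≤ 1 := ContDiffBump.le_one _

lemma contDiff_ofReal_diskCutoff {n : ℕ∞} : ContDiff ℝ n fun z ↦ (diskCutoff p ρ z : ℂ) :=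
  Complex.ofRealCLM.contDiff.comp contDiff_diskCutoff

lemma tsupport_dzbar_diskCutoff_subset (hρ : 0 < ρ) :
    tsupport (dzbar fun z ↦ diskCutoff p ρ z) ⊆ closedBall p (2 * ρ) \ ball p ρ := by
  refine closure_minimal (fun z hz ↦ ?_) (isClosed_closedBall.sdiff isOpen_ball)
  refine ⟨by_contra fun h ↦ hz ?_, fun h ↦ hz ?_⟩
  · rw [dzbar_congr (g := fun _ ↦ 0), dzbar_eq_zero (differentiableAt_const 0)]
    filter_upwards [isClosed_closedBall.isOpen_compl.mem_nhds h] with ξ hξ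
    rw [Set.mem_compl_iff, mem_closedBall_iff_norm, not_le] at hξ
    rw [diskCutoff_eq_zero hρ hξ.le, Complex.ofReal_zero]
  · rw [dzbar_congr (g := fun _ ↦ 1), dzbar_eq_zero (differentiableAt_const 1)]
    filter_upwards [isOpen_ball.mem_nhds h] with ξ hξ
    rw [diskCutoff_eq_one hρ (mem_ball_iff_norm.1 hξ).le, Complex.ofReal_one]

lemma dzbar_diskCutoff : dzbar (fun z ↦ diskCutoff p ρ z) z =
    (ρ : ℂ)⁻¹ * dzbar (fun z ↦ diskCutoff 0 1 z) ((ρ : ℂ)⁻¹ * (z - p)) := by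
  have h_scale : HasDerivAt (fun z ↦ (ρ : ℂ)⁻¹ * (z - p)) (ρ : ℂ)⁻¹ z := by
    simpa using ((hasDerivAt_id z).sub_const p).const_mul (ρ : ℂ)⁻¹
  have h_comp := dzbar_comp_holomorphic h_scale
    ((contDiff_ofReal_diskCutoff (p := 0) (ρ := 1) (n := 1)).differentiable one_ne_zero _)
  rw [map_inv₀, Complex.conj_ofReal] at h_comp
  rw [← h_comp]
  simp [diskCutoff]

lemma dz_dzbar_diskCutoff : dz (dzbar fun z ↦ diskCutoff p ρ z) z =
    (ρ : ℂ)⁻¹ ^ 2 * dz (dzbar fun z ↦ diskCutoff 0 1 z) ((ρ : ℂ)⁻¹ * (z - p)) := by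
  have h_scale : HasDerivAt (fun z ↦ (ρ : ℂ)⁻¹ * (z - p)) (ρ : ℂ)⁻¹ z := by
    simpa using ((hasDerivAt_id z).sub_const p).const_mul (ρ : ℂ)⁻¹
  have h_diff := (contDiff_dzbar (contDiff_ofReal_diskCutoff (p := 0) (ρ := 1) (n := 2))
    one_add_one_eq_two.le).differentiable one_ne_zero ((ρ : ℂ)⁻¹ * (z - p))
  have h_diff_comp : DifferentiableAt ℝ
      (fun z ↦ dzbar (fun z ↦ diskCutoff 0 1 z) ((ρ : ℂ)⁻¹ * (z - p))) z :=
    DifferentiableAt.comp (g := dzbar _) z h_diff (h_scale.differentiableAt.restrictScalars ℝ)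
  rw [dz_congr (Eventually.of_forall fun z ↦ dzbar_diskCutoff),
    dz_mul (differentiableAt_const _) h_diff_comp, dz_const, dz_comp_holomorphic h_scale h_diff]
  ring

lemma exists_norm_dzbar_diskCutoff_le : ∃ M, ∀ (p : ℂ) {ρ : ℝ}, 0 < ρ → ∀ z,
    ‖dzbar (fun z ↦ diskCutoff p ρ z) z‖ ≤ M / ρ ∧
      ‖dz (dzbar fun z ↦ diskCutoff p ρ z) z‖ ≤ M / ρ ^ 2 := by
  have h_dzbar : ContDiff ℝ 1 (dzbar fun z ↦ diskCutoff 0 1 z) :=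
    contDiff_dzbar (contDiff_ofReal_diskCutoff (n := 2)) one_add_one_eq_two.le
  have h_supp : HasCompactSupport (dzbar fun z ↦ diskCutoff 0 1 z) :=
    (isCompact_closedBall 0 (2 * 1)).of_isClosed_subset (isClosed_tsupport _)
      ((tsupport_dzbar_diskCutoff_subset one_pos).trans Set.sdiff_subset)
  obtain ⟨M₁, hM₁⟩ := h_supp.exists_bound_of_continuous h_dzbar.continuous
  obtain ⟨M₂, hM₂⟩ := (hasCompactSupport_dz h_supp).exists_bound_of_continuous
    (contDiff_dz h_dzbar (zero_add 1).le).continuous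
  refine ⟨max M₁ M₂, fun p ρ hρ z ↦ ⟨?_, ?_⟩⟩
  · rw [dzbar_diskCutoff, norm_mul, norm_inv, Complex.norm_of_nonneg hρ.le, inv_mul_eq_div]
    gcongr
    exact (hM₁ _).trans (le_max_left _ _)
  · rw [dz_dzbar_diskCutoff, norm_mul, norm_pow, norm_inv, Complex.norm_of_nonneg hρ.le, inv_pow,
      inv_mul_eq_div]
    gcongr
    exact (hM₂ _).trans (le_max_right _ _)

end DiskCutoff

lemma norm_dz_mul_inv_sub_le {k : ℂ → ℂ} {z₀ ζ : ℂ} {d : ℝ} (hd : 0 < d) (hζ : d ≤ ‖ζ - z₀‖)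
    (hk : DifferentiableAt ℝ k ζ) :
    ‖dz (fun ξ ↦ k ξ * (ξ - z₀)⁻¹) ζ‖ ≤ ‖dz k ζ‖ / d + ‖k ζ‖ / d ^ 2 := by
  have h_inv : HasDerivAt (fun ξ ↦ (ξ - z₀)⁻¹) (-1 / (ζ - z₀) ^ 2) ζ :=
    ((hasDerivAt_id ζ).sub_const z₀).inv (norm_pos_iff.1 (hd.trans_le hζ))
  rw [dz_mul hk (h_inv.differentiableAt.restrictScalars ℝ), dz_eq_of_hasDerivAt h_inv]
  refine (norm_add_le _ _).trans ?_
  rw [norm_mul, norm_mul, norm_div, norm_neg, norm_one, norm_inv, norm_pow, ← div_eq_mul_inv,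
    mul_one_div]
  gcongr

lemma exists_norm_integral_mul_dz_dzbar_diskCutoff_le : ∃ M, 0 ≤ M ∧
    ∀ {p z₀ : ℂ} {ρ d W : ℝ} {w : ℂ → ℂ}, 0 < ρ → ρ ≤ 2 * d → 0 ≤ W →
      (∀ ζ ∈ closedBall p (2 * ρ) \ ball p ρ, d ≤ ‖ζ - z₀‖ ∧ ‖w ζ‖ ≤ W) →
      ‖∫ ζ, w ζ * dz (fun ξ ↦ dzbar (fun z ↦ diskCutoff p ρ z) ξ * (ξ - z₀)⁻¹) ζ‖ ≤
        M * W / d := by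
  obtain ⟨M, hM⟩ := exists_norm_dzbar_diskCutoff_le
  have hM₀ : 0 ≤ M := by simpa using (norm_nonneg _).trans (hM 0 one_pos 0).1
  refine ⟨12 * π * M, by positivity, fun {p z₀ ρ d W w} hρ hd hW h ↦ ?_⟩
  have hd₀ : 0 < d := by linarith
  set A := closedBall p (2 * ρ) \ ball p ρ
  set u : ℂ → ℂ := fun ξ ↦ dzbar (fun z ↦ diskCutoff p ρ z) ξ * (ξ - z₀)⁻¹
  have h_bound : ∀ ζ ∈ A, ‖w ζ * dz u ζ‖ ≤ W * (3 * M / (ρ ^ 2 * d)) := by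
    intro ζ hζ
    rw [norm_mul]
    refine mul_le_mul (h ζ hζ).2 ((norm_dz_mul_inv_sub_le hd₀ (h ζ hζ).1 ((contDiff_dzbar
      contDiff_ofReal_diskCutoff one_add_one_eq_two.le).differentiable one_ne_zero ζ)).trans ?_)
      (norm_nonneg _) hW
    calc _ ≤ M / ρ ^ 2 / d + M / ρ / d ^ 2 := by gcongr <;> simp only [hM p hρ ζ]
      _ = M / (ρ ^ 2 * d) + M / (ρ ^ 2 * d) * (ρ / d) := by field_simp
      _ ≤ M / (ρ ^ 2 * d) + M / (ρ ^ 2 * d) * 2 := by gcongr; exact (div_le_iff₀ hd₀).2 hd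
      _ = 3 * M / (ρ ^ 2 * d) := by ring
  have h_zero : ∀ ζ ∉ A, w ζ * dz u ζ = 0 := fun ζ hζ ↦ by
    rw [image_eq_zero_of_notMem_tsupport fun h ↦ hζ (tsupport_dzbar_diskCutoff_subset hρ
      (tsupport_mul_subset_left (tsupport_dz_subset _ h))), mul_zero]
  have h_volume : volume.real A ≤ 4 * π * ρ ^ 2 := by
    refine (measureReal_mono Set.sdiff_subset measure_closedBall_lt_top.ne).trans_eq ?_
    rw [Measure.real, Complex.volume_closedBall, ENNReal.toReal_mul, ENNReal.toReal_pow,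
      ENNReal.toReal_ofReal (by positivity), ENNReal.coe_toReal, NNReal.coe_real_pi]
    ring
  rw [← setIntegral_eq_integral_of_forall_compl_eq_zero h_zero]
  calc _ ≤ W * (3 * M / (ρ ^ 2 * d)) * volume.real A := norm_setIntegral_le_of_norm_le_const
        ((measure_mono Set.sdiff_subset).trans_lt measure_closedBall_lt_top) h_bound
    _ ≤ W * (3 * M / (ρ ^ 2 * d)) * (4 * π * ρ ^ 2) := by gcongr
    _ = 12 * π * M * W / d := by field_simp; ring

lemma ball_eq_preimage_sub {E : Type*} [SeminormedAddCommGroup E] (c : E) (r : ℝ) :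
    ball c r = (fun ζ ↦ ζ - c) ⁻¹' ball 0 r := by
  ext ζ
  simp [dist_eq_norm]

lemma integrableOn_norm_sub_rpow_neg {b : ℝ} (hb : b < 2) (c : ℂ) (r : ℝ) :
    IntegrableOn (fun ζ ↦ ‖ζ - c‖ ^ (-b)) (ball c r) := by
  have h_int : IntegrableOn (fun ζ : ℂ ↦ ‖ζ‖ ^ (-b)) (ball 0 r) :=
    ((locallyIntegrable_norm_rpow_neg hb).integrableOn_isCompact
      (isCompact_closedBall 0 r)).mono_set ball_subset_closedBall
  rw [ball_eq_preimage_sub]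
  exact ((measurePreserving_sub_right volume c).integrableOn_comp_preimage
    (measurableEmbedding_subRight c)).2 h_int

lemma setIntegral_ball_norm_sub_rpow_neg (b : ℝ) (c : ℂ) (r : ℝ) :
    ∫ ζ in ball c r, ‖ζ - c‖ ^ (-b) = ∫ ζ in ball (0 : ℂ) r, ‖ζ‖ ^ (-b) := by
  rw [ball_eq_preimage_sub]
  exact (measurePreserving_sub_right volume c).setIntegral_preimage_emb
    (measurableEmbedding_subRight c) (fun ζ ↦ ‖ζ‖ ^ (-b)) (ball 0 r)

lemma rpow_neg_mul_rpow_neg_le_add {x y s t : ℝ} (hx : 0 < x) (hy : 0 < y) (hs : 0 ≤ s)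
    (ht : 0 ≤ t) : x ^ (-s) * y ^ (-t) ≤ x ^ (-(s + t)) + y ^ (-(s + t)) := by
  wlog h : x ≤ y generalizing x y s t
  · have := this hy hx ht hs (le_of_not_ge h)
    rwa [mul_comm, add_comm, add_comm t s] at this
  calc x ^ (-s) * y ^ (-t) ≤ x ^ (-s) * x ^ (-t) := by
        gcongr ?_ * ?_
        exact Real.rpow_le_rpow_of_nonpos hx h (neg_nonpos.2 ht)
    _ = x ^ (-(s + t)) := by rw [← Real.rpow_add hx, neg_add]
    _ ≤ x ^ (-(s + t)) + y ^ (-(s + t)) := le_add_of_nonneg_right (by positivity)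

lemma norm_rpow_mul_rpow_neg_mul_inv_le {E : Type*} [NormedAddCommGroup E] {a : ℝ} (ha : 0 ≤ a)
    (ha' : a ≤ 2) {p z ζ : E} (hp : ζ ≠ p) (hz : ζ ≠ z) :
    ‖z - p‖ ^ (a / 2) * (‖ζ - p‖ ^ (-a) * ‖ζ - z‖⁻¹) ≤
      2 * (‖ζ - p‖ ^ (-(1 + a / 2)) + ‖ζ - z‖ ^ (-(1 + a / 2))) := by
  have hx := norm_sub_pos_iff.2 hp
  have hy := norm_sub_pos_iff.2 hz
  have h_triangle : ‖z - p‖ ≤ ‖ζ - p‖ + ‖ζ - z‖ := by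
    rw [add_comm, ← norm_sub_rev z ζ]
    exact norm_sub_le_norm_sub_add_norm_sub z ζ p
  set x := ‖ζ - p‖
  set y := ‖ζ - z‖
  have h_sub : ‖z - p‖ ^ (a / 2) ≤ x ^ (a / 2) + y ^ (a / 2) :=
    (Real.rpow_le_rpow (norm_nonneg _) h_triangle (by positivity)).trans
      (Real.rpow_add_le_add_rpow hx.le hy.le (by positivity) (by linarith))
  have h_split := rpow_neg_mul_rpow_neg_le_add hx hy (s := a / 2) (t := 1) (by positivity)
    zero_le_one
  have h_split' := rpow_neg_mul_rpow_neg_le_add hx hy (s := a) (t := 1 - a / 2) ha (by linarith)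
  rw [add_comm (a / 2)] at h_split
  rw [show a + (1 - a / 2) = 1 + a / 2 by ring] at h_split'
  calc _ ≤ (x ^ (a / 2) + y ^ (a / 2)) * (x ^ (-a) * y⁻¹) := by gcongr
    _ = x ^ (a / 2 + -a) * y ^ (-1 : ℝ) + x ^ (-a) * y ^ (a / 2 + -1) := by
      rw [Real.rpow_add hx, Real.rpow_add hy, Real.rpow_neg_one]
      ring
    _ = x ^ (-(a / 2)) * y ^ (-1 : ℝ) + x ^ (-a) * y ^ (-(1 - a / 2)) := by ring_nf
    _ ≤ 2 * (x ^ (-(1 + a / 2)) + y ^ (-(1 + a / 2))) := by linarith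

lemma integrableOn_and_setIntegral_rpow_neg_mul_inv_le {a : ℝ} (ha : 0 ≤ a) (ha' : a < 2) {p z : ℂ}
    {R : ℝ} (hz : z ∈ ball p R) (hzp : z ≠ p) :
    IntegrableOn (fun ζ ↦ ‖ζ - p‖ ^ (-a) * ‖ζ - z‖⁻¹) (ball p R) ∧
      ∫ ζ in ball p R, ‖ζ - p‖ ^ (-a) * ‖ζ - z‖⁻¹ ≤
        4 * (∫ ζ in ball (0 : ℂ) (2 * R), ‖ζ‖ ^ (-(1 + a / 2))) * ‖z - p‖ ^ (-(a / 2)) := by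
  have hb : 1 + a / 2 < 2 := by linarith
  have hR : 0 < R := pos_of_mem_ball hz
  have h_pos : 0 < ‖z - p‖ ^ (a / 2) := Real.rpow_pos_of_pos (norm_sub_pos_iff.2 hzp) _
  have h_sub_p : ball p R ⊆ ball p (2 * R) := ball_subset_ball (by linarith)
  have h_sub_z : ball p R ⊆ ball z (2 * R) := ball_subset_ball' (by
    rw [dist_comm]; linarith [mem_ball.1 hz])
  have h_int (c : ℂ) (hc : ball p R ⊆ ball c (2 * R)) :=
    (integrableOn_norm_sub_rpow_neg hb c (2 * R)).mono_set hc
  have h_le (c : ℂ) (hc : ball p R ⊆ ball c (2 * R)) : ∫ ζ in ball p R, ‖ζ - c‖ ^ (-(1 + a / 2)) ≤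
      ∫ ζ in ball (0 : ℂ) (2 * R), ‖ζ‖ ^ (-(1 + a / 2)) := by
    rw [← setIntegral_ball_norm_sub_rpow_neg _ c]
    exact setIntegral_mono_set (integrableOn_norm_sub_rpow_neg hb c _)
      (ae_of_all _ fun _ ↦ by positivity) hc.eventuallyLE
  have h_majorant := ((h_int p h_sub_p).add (h_int z h_sub_z)).const_mul 2
  have h_ae : ∀ᵐ ζ ∂volume.restrict (ball p R), ‖z - p‖ ^ (a / 2) * (‖ζ - p‖ ^ (-a) * ‖ζ - z‖⁻¹) ≤
      2 * (‖ζ - p‖ ^ (-(1 + a / 2)) + ‖ζ - z‖ ^ (-(1 + a / 2))) := by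
    filter_upwards [ae_restrict_of_ae (Measure.ae_ne volume p),
      ae_restrict_of_ae (Measure.ae_ne volume z)] with ζ hζp hζz
    exact norm_rpow_mul_rpow_neg_mul_inv_le ha ha'.le hζp hζz
  have h_int_mul : IntegrableOn (fun ζ ↦ ‖z - p‖ ^ (a / 2) * (‖ζ - p‖ ^ (-a) * ‖ζ - z‖⁻¹))
      (ball p R) := by
    refine h_majorant.mono' (by fun_prop) ?_
    filter_upwards [h_ae] with ζ hζ
    rwa [Real.norm_of_nonneg (by positivity)]
  refine ⟨(integrable_const_mul_iff (IsUnit.mk0 _ h_pos.ne') _).1 h_int_mul, ?_⟩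
  rw [Real.rpow_neg (norm_nonneg _), ← div_eq_mul_inv, le_div_iff₀' h_pos, ← integral_const_mul]
  refine (integral_mono_ae h_int_mul h_majorant h_ae).trans ?_
  rw [integral_const_mul]
  simp only [Pi.add_apply]
  rw [integral_add (h_int p h_sub_p) (h_int z h_sub_z)]
  linarith [h_le p h_sub_p, h_le z h_sub_z]

section PuncturedDisk

variable {w : ℂ → ℂ} {p z₀ : ℂ} {ε R : ℝ}

lemma tsupport_diskCutoff_sub_subset (hε : 0 < ε) (hεR : ε ≤ R) :
    tsupport (fun z ↦ (diskCutoff p R z - diskCutoff p ε z : ℂ)) ⊆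
      closedBall p (2 * R) \ ball p ε := by
  refine closure_minimal (fun z hz ↦ ?_) (isClosed_closedBall.sdiff isOpen_ball)
  refine ⟨by_contra fun h ↦ hz ?_, fun h ↦ hz ?_⟩
  · rw [mem_closedBall_iff_norm, not_le] at h
    simp only [diskCutoff_eq_zero (hε.trans_le hεR) h.le,
      diskCutoff_eq_zero hε (by linarith : 2 * ε ≤ ‖z - p‖), sub_self]
  · rw [mem_ball_iff_norm] at h
    simp only [diskCutoff_eq_one (hε.trans_le hεR) (by linarith : ‖z - p‖ ≤ R),
      diskCutoff_eq_one hε h.le, sub_self]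

lemma integrable_mul_dz_dzbar_diskCutoff {ρ : ℝ} (hρ : 0 < ρ)
    (hz₀ : z₀ ∉ closedBall p (2 * ρ) \ ball p ρ)
    (hw : ∀ z ∈ closedBall p (2 * ρ) \ ball p ρ, ContinuousAt w z) :
    Integrable fun ζ ↦
      w ζ * dz (fun ξ ↦ dzbar (fun z ↦ diskCutoff p ρ z) ξ * (ξ - z₀)⁻¹) ζ := by
  have h_subset : tsupport (fun ξ ↦ dzbar (fun z ↦ diskCutoff p ρ z) ξ * (ξ - z₀)⁻¹) ⊆
      closedBall p (2 * ρ) \ ball p ρ :=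
    tsupport_mul_subset_left.trans (tsupport_dzbar_diskCutoff_subset hρ)
  refine integrable_mul_of_continuousAt_tsupport (contDiff_dz (contDiff_dzbar_mul_inv_sub
    contDiff_ofReal_diskCutoff fun h ↦ hz₀ (tsupport_dzbar_diskCutoff_subset hρ h))
    (zero_add 1).le).continuous
    (hasCompactSupport_dz ((isCompact_closedBall p (2 * ρ)).of_isClosed_subset
      (isClosed_tsupport _) (h_subset.trans Set.sdiff_subset)))
    fun z hz ↦ hw z (h_subset (tsupport_dz_subset _ hz))

lemma pi_mul_dz_eq_of_punctured_disk (hε : 0 < ε) (hεz₀ : 2 * ε < ‖z₀ - p‖) (hz₀R : ‖z₀ - p‖ < R)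
    (hw : ∀ z ∈ closedBall p (2 * R) \ ball p ε, ContDiffAt ℝ 2 w z) :
    π * dz w z₀ =
      (∫ ζ, w ζ * dz (fun ξ ↦ dzbar (fun z ↦ diskCutoff p R z) ξ * (ξ - z₀)⁻¹) ζ) -
      (∫ ζ, w ζ * dz (fun ξ ↦ dzbar (fun z ↦ diskCutoff p ε z) ξ * (ξ - z₀)⁻¹) ζ) -
      ∫ ζ, (diskCutoff p R ζ - diskCutoff p ε ζ) * dzbar (dz w) ζ * (ζ - z₀)⁻¹ := by
  have hεR : ε ≤ R := by linarith
  have hR : 0 < R := hε.trans_le hεR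
  have h_subset := tsupport_diskCutoff_sub_subset (p := p) hε hεR
  have hz₀_outer : z₀ ∉ closedBall p (2 * R) \ ball p R := fun h ↦ h.2 (mem_ball_iff_norm.2 hz₀R)
  have hz₀_inner : z₀ ∉ closedBall p (2 * ε) \ ball p ε := fun h ↦
    hεz₀.not_ge (mem_closedBall_iff_norm.1 h.1)
  have h_outer := fun h ↦ hz₀_outer (tsupport_dzbar_diskCutoff_subset hR h)
  have h_inner := fun h ↦ hz₀_inner (tsupport_dzbar_diskCutoff_subset hε h)
  have h_dzbar : dzbar (fun z ↦ (diskCutoff p R z - diskCutoff p ε z : ℂ)) =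
      (dzbar fun z ↦ diskCutoff p R z) - dzbar fun z ↦ diskCutoff p ε z := funext fun z ↦
    dzbar_sub (contDiff_ofReal_diskCutoff.differentiable two_ne_zero z)
      (contDiff_ofReal_diskCutoff.differentiable two_ne_zero z)
  have h_repr := pi_mul_dz_eq_integral_sub_integral (w := w) (z₀ := z₀)
    (contDiff_ofReal_diskCutoff.sub contDiff_ofReal_diskCutoff)
    ((isCompact_closedBall p (2 * R)).of_isClosed_subset (isClosed_tsupport _)
      (h_subset.trans Set.sdiff_subset))
    (fun z hz ↦ hw z (h_subset hz))
    (fun h ↦ (tsupport_sub _ _ (congrArg (z₀ ∈ tsupport ·) h_dzbar ▸ h)).elim h_outer h_inner)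
    (by simp [diskCutoff_eq_one hR hz₀R.le, diskCutoff_eq_zero hε hεz₀.le])
  rw [h_repr, ← integral_sub (integrable_mul_dz_dzbar_diskCutoff hR hz₀_outer fun z hz ↦
      (hw z ⟨hz.1, fun h ↦ hz.2 (ball_subset_ball hεR h)⟩).continuousAt)
    (integrable_mul_dz_dzbar_diskCutoff hε hz₀_inner fun z hz ↦
      (hw z ⟨closedBall_subset_closedBall (by linarith) hz.1, hz.2⟩).continuousAt)]
  congr 2
  ext ζ
  rw [← mul_sub, ← dz_sub ((contDiff_dzbar_mul_inv_sub contDiff_ofReal_diskCutoff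
      h_outer).differentiable one_ne_zero ζ)
    ((contDiff_dzbar_mul_inv_sub contDiff_ofReal_diskCutoff h_inner).differentiable one_ne_zero ζ)]
  simp only [h_dzbar, Pi.sub_apply, sub_mul]

lemma norm_integral_diskCutoff_sub_mul_le {h : ℂ → ℂ} {a C : ℝ} (ha : 0 ≤ a) (ha' : a < 2)
    (hC : 0 ≤ C) (hε : 0 < ε) (hεR : ε ≤ R) (hz₀ : z₀ ∈ ball p R) (hz₀p : z₀ ≠ p)
    (hh : ∀ ζ ∈ closedBall p (2 * R), ζ ≠ p → ‖h ζ‖ ≤ C * ‖ζ - p‖ ^ (-a)) :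
    ‖∫ ζ, (diskCutoff p R ζ - diskCutoff p ε ζ) * h ζ * (ζ - z₀)⁻¹‖ ≤
      C * (4 * (∫ ζ in ball (0 : ℂ) (2 * (3 * R)), ‖ζ‖ ^ (-(1 + a / 2))) *
        ‖z₀ - p‖ ^ (-(a / 2))) := by
  obtain ⟨h_int, h_le⟩ := integrableOn_and_setIntegral_rpow_neg_mul_inv_le ha ha'
    (ball_subset_ball (by linarith : R ≤ 3 * R) hz₀) hz₀p
  refine le_trans ?_ (mul_le_mul_of_nonneg_left h_le hC)
  rw [← integral_const_mul, ← integral_indicator measurableSet_ball]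
  refine norm_integral_le_of_norm_le
    ((integrable_indicator_iff measurableSet_ball).2 (h_int.const_mul C)) ?_
  filter_upwards [Measure.ae_ne volume p] with ζ hζp
  by_cases hζ : ζ ∈ closedBall p (2 * R)
  · rw [Set.indicator_of_mem (closedBall_subset_ball (by linarith : 2 * R < 3 * R) hζ), norm_mul,
      norm_mul, norm_inv, ← mul_assoc]
    refine mul_le_mul_of_nonneg_right ?_ (by positivity)
    have h_cutoff : ‖(diskCutoff p R ζ - diskCutoff p ε ζ : ℂ)‖ ≤ 1 := by
      rw [← Complex.ofReal_sub, Complex.norm_real, Real.norm_eq_abs, abs_le]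
      constructor <;>
      linarith [diskCutoff_nonneg (p := p) (ρ := R) (z := ζ),
        diskCutoff_nonneg (p := p) (ρ := ε) (z := ζ),
        diskCutoff_le_one (p := p) (ρ := R) (z := ζ), diskCutoff_le_one (p := p) (ρ := ε) (z := ζ)]
    exact (mul_le_of_le_one_left (norm_nonneg _) h_cutoff).trans (hh ζ hζ hζp)
  · rw [image_eq_zero_of_notMem_tsupport fun h ↦ hζ (tsupport_diskCutoff_sub_subset hε hεR h).1,
      zero_mul, zero_mul, norm_zero]
    exact Set.indicator_nonneg (fun _ _ ↦ by positivity) _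

lemma exists_norm_dz_le_of_annulus : ∃ M, 0 ≤ M ∧
    ∀ {w : ℂ → ℂ} {p z : ℂ} {a C ε δ R : ℝ}, 0 ≤ a → a < 2 → 0 ≤ C → 0 ≤ δ → 0 < ε →
      4 * ε < ‖z - p‖ → ‖z - p‖ ≤ R / 2 →
      (∀ ζ ∈ closedBall p (2 * R) \ ball p ε, ContDiffAt ℝ 2 w ζ) →
      (∀ ζ ∈ closedBall p (2 * ε) \ ball p ε, ‖w ζ‖ ≤ δ) →
      (∀ ζ ∈ closedBall p (2 * R) \ ball p R, ‖w ζ‖ ≤ 1) →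
      (∀ ζ ∈ closedBall p (2 * R), ζ ≠ p → ‖dzbar (dz w) ζ‖ ≤ C * ‖ζ - p‖ ^ (-a)) →
      ‖dz w z‖ ≤ M * 1 / (R / 2) + M * δ / (‖z - p‖ / 2) +
        C * (4 * (∫ ζ in ball (0 : ℂ) (2 * (3 * R)), ‖ζ‖ ^ (-(1 + a / 2))) *
          ‖z - p‖ ^ (-(a / 2))) := by
  obtain ⟨M, hM₀, hM⟩ := exists_norm_integral_mul_dz_dzbar_diskCutoff_le
  refine ⟨M, hM₀, fun {w p z a C ε δ R} ha ha' hC hδ hε hεz hzR hreg h_in h_out hh ↦ ?_⟩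
  have h_outer := hM (z₀ := z) (d := R / 2) (by linarith) (by linarith) zero_le_one
    fun ζ hζ ↦ ⟨by
      have h_triangle := norm_sub_norm_le (ζ - p) (z - p)
      rw [sub_sub_sub_cancel_right] at h_triangle
      linarith [not_lt.1 fun h ↦ hζ.2 (mem_ball_iff_norm.2 h)], h_out ζ hζ⟩
  have h_inner := hM (z₀ := z) (d := ‖z - p‖ / 2) hε (by linarith) hδ fun ζ hζ ↦ ⟨by
      have h_triangle := norm_sub_norm_le (z - p) (ζ - p)
      rw [sub_sub_sub_cancel_right, norm_sub_rev z ζ] at h_triangle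
      linarith [mem_closedBall_iff_norm.1 hζ.1], h_in ζ hζ⟩
  have h_area := norm_integral_diskCutoff_sub_mul_le ha ha' hC hε (by linarith)
    (mem_ball_iff_norm.2 (by linarith : ‖z - p‖ < R)) (norm_sub_pos_iff.1 (by linarith)) hh
  calc ‖dz w z‖ ≤ ‖(π : ℂ) * dz w z‖ := by
        rw [norm_mul, Complex.norm_real, Real.norm_of_nonneg Real.pi_pos.le]
        exact le_mul_of_one_le_left (norm_nonneg _) (by linarith [Real.pi_gt_three])
    _ ≤ _ := by
      rw [pi_mul_dz_eq_of_punctured_disk hε (by linarith) (by linarith) hreg]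
      exact (norm_sub_le _ _).trans (add_le_add ((norm_sub_le _ _).trans
        (add_le_add h_outer h_inner)) h_area)

lemma exists_norm_dz_le_of_punctured_disk {a C : ℝ} (ha : 0 ≤ a) (ha' : a < 2) (hC : 0 ≤ C)
    (hR : 0 < R) (hw₀ : Tendsto w (𝓝[≠] p) (𝓝 0))
    (hreg : ∀ z ∈ closedBall p (2 * R), z ≠ p → ContDiffAt ℝ 2 w z)
    (hw : ∀ z ∈ closedBall p (2 * R), z ≠ p → ‖w z‖ ≤ 1)
    (hh : ∀ z ∈ closedBall p (2 * R), z ≠ p → ‖dzbar (dz w) z‖ ≤ C * ‖z - p‖ ^ (-a)) :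
    ∃ K, ∀ z, z ≠ p → ‖z - p‖ ≤ R / 2 → ‖dz w z‖ ≤ K * (1 + ‖z - p‖ ^ (-(a / 2))) := by
  obtain ⟨M, hM₀, hM⟩ := exists_norm_dz_le_of_annulus
  set I := ∫ ζ in ball (0 : ℂ) (2 * (3 * R)), ‖ζ‖ ^ (-(1 + a / 2))
  have hI : 0 ≤ I := integral_nonneg fun _ ↦ by positivity
  refine ⟨M * 1 / (R / 2) + M * 2 + C * (4 * I), fun z hzp hz ↦ ?_⟩
  have hz₀ : 0 < ‖z - p‖ := norm_sub_pos_iff.2 hzp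
  obtain ⟨r, hr, h_small⟩ := Metric.eventually_nhds_iff_ball.1 (eventually_nhdsWithin_iff.1
    (hw₀.norm.eventually_le_const (norm_zero.trans_lt hz₀)))
  obtain ⟨ε, hε, hε'⟩ := exists_between (lt_min (half_pos hr) (by positivity : 0 < ‖z - p‖ / 4))
  obtain ⟨hεr, hεz⟩ := lt_min_iff.1 hε'
  have h_ne {ρ : ℝ} (hρ : 0 < ρ) {ζ : ℂ} (hζ : ζ ∉ ball p ρ) : ζ ≠ p := fun h ↦
    hζ (h ▸ mem_ball_self hρ)
  have h_bound := hM ha ha' hC hz₀.le hε (by linarith) hz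
    (fun ζ hζ ↦ hreg ζ hζ.1 (h_ne hε hζ.2))
    (fun ζ hζ ↦ h_small ζ (closedBall_subset_ball (by linarith) hζ.1) (h_ne hε hζ.2))
    (fun ζ hζ ↦ hw ζ hζ.1 (h_ne hR hζ.2)) hh
  rw [show M * ‖z - p‖ / (‖z - p‖ / 2) = M * 2 by field_simp] at h_bound
  have h_rpow : 0 ≤ ‖z - p‖ ^ (-(a / 2)) := by positivity
  have h_outer_nonneg : 0 ≤ M * 1 / (R / 2) := by positivity
  nlinarith [mul_nonneg hC hI, mul_nonneg h_outer_nonneg h_rpow, mul_nonneg hM₀ h_rpow]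

end PuncturedDisk

lemma dz_isBigO_of_dzbar_dz_isBigO {w : ℂ → ℂ} {p c : ℂ} {a : ℝ} (ha : 0 ≤ a) (ha' : a < 2)
    (hw : Tendsto w (𝓝[≠] p) (𝓝 c)) (hreg : ∀ᶠ z in 𝓝[≠] p, ContDiffAt ℝ 2 w z)
    (hh : dzbar (dz w) =O[𝓝[≠] p] fun z ↦ ‖z - p‖ ^ (-a)) :
    dz w =O[𝓝[≠] p] fun z ↦ ‖z - p‖ ^ (-(a / 2)) := by
  obtain ⟨C, hC, hh⟩ := hh.exists_nonneg
  have hw₀ : Tendsto (fun z ↦ w z - c) (𝓝[≠] p) (𝓝 0) := tendsto_sub_nhds_zero_iff.2 hw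
  have h_dz {z : ℂ} (hz : ContDiffAt ℝ 2 w z) : dz (fun z ↦ w z - c) =ᶠ[𝓝 z] dz w := by
    filter_upwards [hz.eventually (by simp)] with x hx
    rw [dz_sub (hx.differentiableAt two_ne_zero) (differentiableAt_const c), dz_const, sub_zero]
  have h_all : ∀ᶠ z in 𝓝[≠] p, ContDiffAt ℝ 2 w z ∧ ‖w z - c‖ ≤ 1 ∧
      ‖dzbar (dz w) z‖ ≤ C * ‖z - p‖ ^ (-a) := by
    filter_upwards [hreg, hw₀.norm.eventually_le_const (norm_zero.trans_lt one_pos), hh.bound]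
      with z hz hz' hz''
    rw [Real.norm_of_nonneg (by positivity)] at hz''
    exact ⟨hz, hz', hz''⟩
  obtain ⟨R, hR, h_all⟩ := Metric.eventually_nhds_iff_ball.1 (eventually_nhdsWithin_iff.1 h_all)
  have h_sub : closedBall p (2 * (R / 3)) ⊆ ball p R := closedBall_subset_ball (by linarith)
  obtain ⟨K, hK⟩ := exists_norm_dz_le_of_punctured_disk ha ha' hC (by positivity : 0 < R / 3) hw₀
    (fun z hz hzp ↦ (h_all z (h_sub hz) hzp).1.sub contDiffAt_const)
    (fun z hz hzp ↦ (h_all z (h_sub hz) hzp).2.1) fun z hz hzp ↦ by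
      rw [dzbar_congr (h_dz (h_all z (h_sub hz) hzp).1)]
      exact (h_all z (h_sub hz) hzp).2.2
  refine .of_bound (2 * |K|) ?_
  filter_upwards [self_mem_nhdsWithin, nhdsWithin_le_nhds (closedBall_mem_nhds p
    (by positivity : 0 < min 1 (R / 3 / 2)))] with z hzp hz
  obtain ⟨hz₁, hzR⟩ := le_min_iff.1 (mem_closedBall_iff_norm.1 hz)
  have h_one : 1 ≤ ‖z - p‖ ^ (-(a / 2)) :=
    Real.one_le_rpow_of_pos_of_le_one_of_nonpos (norm_sub_pos_iff.2 hzp) hz₁ (by linarith)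
  have h_bound := hK z hzp hzR
  rw [(h_dz (h_all z (ball_subset_ball (by linarith) (mem_ball_iff_norm.2 (by linarith :
    ‖z - p‖ < R))) hzp).1).eq_of_nhds] at h_bound
  rw [Real.norm_of_nonneg (by positivity)]
  calc _ ≤ |K| * (1 + ‖z - p‖ ^ (-(a / 2))) := h_bound.trans (by gcongr; exact le_abs_self K)
    _ ≤ _ := by nlinarith [abs_nonneg K]

lemma dz_isBigO_cobounded_of_dzbar_dz_isBigO {w : ℂ → ℂ} {c : ℂ}
    (hw : Tendsto w (Bornology.cobounded ℂ) (𝓝 c))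
    (hreg : ∀ᶠ z in Bornology.cobounded ℂ, ContDiffAt ℝ 2 w z)
    (hh : dzbar (dz w) =O[Bornology.cobounded ℂ] fun z ↦ (z ^ 4)⁻¹) :
    dz w =O[Bornology.cobounded ℂ] fun z ↦ (z ^ 2)⁻¹ := by
  have h_inv : Tendsto (fun ζ : ℂ ↦ ζ⁻¹) (𝓝[≠] 0) (Bornology.cobounded ℂ) :=
    tendsto_inv₀_nhdsNE_zero
  have h_inv' : Tendsto (fun z : ℂ ↦ z⁻¹) (Bornology.cobounded ℂ) (𝓝[≠] 0) :=
    tendsto_inv₀_cobounded'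
  have hreg' : ∀ᶠ ζ in 𝓝[≠] (0 : ℂ), ContDiffAt ℝ 2 (fun ζ ↦ w ζ⁻¹) ζ := by
    filter_upwards [h_inv.eventually hreg, self_mem_nhdsWithin] with ζ hζ hζ₀
    exact hζ.comp ζ (contDiffAt_inv ℝ hζ₀)
  have h_eq : (fun ζ ↦ -(ζ ^ 2)⁻¹ * conj (-(ζ ^ 2)⁻¹) * dzbar (dz w) ζ⁻¹) =ᶠ[𝓝[≠] 0]
      dzbar (dz fun ζ ↦ w ζ⁻¹) := by
    filter_upwards [h_inv.eventually hreg, self_mem_nhdsWithin] with ζ hζ hζ₀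
    refine (dzbar_dz_comp_holomorphic (φ' := fun ζ ↦ -(ζ ^ 2)⁻¹) ?_ hζ).symm
    filter_upwards [isOpen_ne.mem_nhds hζ₀] with x hx using hasDerivAt_inv hx
  have h_dzbar_dz : dzbar (dz fun ζ ↦ w ζ⁻¹) =O[𝓝[≠] 0] fun ζ ↦ ‖ζ - 0‖ ^ (-0 : ℝ) := by
    refine .trans (.congr' ((isBigO_refl (fun ζ : ℂ ↦ -(ζ ^ 2)⁻¹ * conj (-(ζ ^ 2)⁻¹)) _).mul
      (hh.comp_tendsto h_inv)) h_eq .rfl) (.of_bound 1 ?_)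
    filter_upwards [self_mem_nhdsWithin] with ζ (hζ : ζ ≠ 0)
    have h_norm : ‖ζ‖ ≠ 0 := norm_ne_zero_iff.2 hζ
    simp only [Function.comp_apply, norm_mul, norm_neg, RCLike.norm_conj, norm_inv, norm_pow,
      neg_zero, rpow_zero, norm_one]
    field_simp
    rfl
  have h_dz : dz (fun ζ ↦ w ζ⁻¹) =O[𝓝[≠] 0] fun _ ↦ (1 : ℂ) :=
    (dz_isBigO_of_dzbar_dz_isBigO le_rfl two_pos (hw.comp h_inv) hreg' h_dzbar_dz).trans
      (.of_bound 1 (by simp))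
  have h_eq' : (fun z ↦ -(z ^ 2)⁻¹ * dz (fun ζ ↦ w ζ⁻¹) z⁻¹) =ᶠ[Bornology.cobounded ℂ] dz w := by
    filter_upwards [h_inv'.eventually hreg', h_inv'.eventually self_mem_nhdsWithin] with z hz hz₀
    simpa only [inv_inv] using (dz_comp_holomorphic (hasDerivAt_inv (mt inv_eq_zero.2 hz₀))
      (hz.differentiableAt two_ne_zero)).symm
  exact ((isBigO_refl (fun z : ℂ ↦ (z ^ 2)⁻¹) _).neg_left.mul (h_dz.comp_tendsto h_inv')).congr'
    h_eq' (.of_forall fun z ↦ mul_one _)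

/-! ### Parabolic open sets -/

/-- `D` is parabolic: the Dirichlet capacity of every compact subset of `D` relative to `D` is
zero, i.e. there are `C¹` cutoffs equal to `1` on it, compactly supported in `D`, of arbitrarily
small Dirichlet energy. -/
def IsParabolic (D : Set ℂ) : Prop :=
  ∀ S ⊆ D, IsCompact S → ∀ ε > 0, ∃ η : ℂ → ℝ, ContDiff ℝ 1 η ∧ HasCompactSupport η ∧
    tsupport η ⊆ D ∧ (∀ z, η z ∈ Set.Icc 0 1) ∧ (∀ z ∈ S, η z = 1) ∧
      ∫ z, ‖fderiv ℝ η z‖ ^ 2 ≤ ε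

lemma integral_closedBall_inv_one_add_norm_sq {R : ℝ} (hR : 0 ≤ R) :
    ∫ z in closedBall (0 : ℂ) R, (1 + ‖z‖ ^ 2)⁻¹ = π * log (1 + R ^ 2) := by
  have h_radial : ∀ z : ℂ, (closedBall (0 : ℂ) R).indicator (fun z ↦ (1 + ‖z‖ ^ 2)⁻¹) z =
      (Set.Iic R).indicator (fun r ↦ (1 + r ^ 2)⁻¹) ‖z‖ := fun z ↦ by
    simp [Set.indicator]
  have h_deriv : ∀ r : ℝ, HasDerivAt (fun r ↦ log (1 + r ^ 2) / 2) (r * (1 + r ^ 2)⁻¹) r :=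
    fun r ↦ by
      convert! (((hasDerivAt_pow 2 r).const_add 1).log (by positivity)).div_const 2 using 1
      field_simp
      simp [mul_comm]
  have h_ftc : ∫ r in (0 : ℝ)..R, r * (1 + r ^ 2)⁻¹ = log (1 + R ^ 2) / 2 := by
    rw [intervalIntegral.integral_eq_sub_of_hasDerivAt (fun r _ ↦ h_deriv r)
      (Continuous.intervalIntegrable (by fun_prop (disch := intros; positivity)) _ _)]
    simp
  rw [← integral_indicator measurableSet_closedBall, funext h_radial, integral_fun_norm_addHaar,
    Complex.finrank_real_complex]
  have h_inner : ∫ r in Set.Ioi (0 : ℝ), r ^ (2 - 1) •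
      (Set.Iic R).indicator (fun r ↦ (1 + r ^ 2)⁻¹) r = log (1 + R ^ 2) / 2 := by
    rw [← h_ftc, intervalIntegral.integral_of_le hR, ← Set.Ioi_inter_Iic,
      ← setIntegral_indicator measurableSet_Iic]
    simp only [Set.indicator_apply, smul_eq_mul, mul_ite, mul_zero, pow_one, Nat.add_one_sub_one]
  rw [h_inner, measureReal_def, Complex.volume_ball]
  simp
  ring

lemma norm_fderiv_log_one_add_norm_sq_sq_le (z : ℂ) :
    ‖fderiv ℝ (fun z : ℂ ↦ log (1 + ‖z‖ ^ 2)) z‖ ^ 2 ≤ 4 * (1 + ‖z‖ ^ 2)⁻¹ := by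
  have h_pos : 0 < 1 + ‖z‖ ^ 2 := by positivity
  rw [(((hasStrictFDerivAt_norm_sq z).hasFDerivAt.const_add 1).log h_pos.ne').fderiv,
    ← Nat.cast_smul_eq_nsmul ℝ, norm_smul, norm_smul, innerSL_apply_norm, norm_inv,
    Real.norm_of_nonneg h_pos.le]
  field_simp
  norm_num

lemma exists_abs_deriv_smoothTransition_le : ∃ C, ∀ x, |deriv smoothTransition x| ≤ C := by
  have h_supp : HasCompactSupport (deriv smoothTransition) := by
    refine .intro (isCompact_Icc (a := (0 : ℝ)) (b := 1)) fun x hx ↦ ?_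
    have h_const : ∃ c, smoothTransition =ᶠ[𝓝 x] fun _ ↦ c := by
      rcases lt_or_ge x 0 with hx₀ | hx₀
      · exact ⟨0, (eventually_lt_nhds hx₀).mono fun y hy ↦ smoothTransition.zero_of_nonpos hy.le⟩
      · exact ⟨1, (eventually_gt_nhds (not_le.1 fun h ↦ hx ⟨hx₀, h⟩)).mono fun y hy ↦
          smoothTransition.one_of_one_le (le_of_lt hy)⟩
    obtain ⟨c, hc⟩ := h_const
    rw [hc.deriv_eq, deriv_const]
  exact h_supp.exists_bound_of_continuous (smoothTransition.contDiff.continuous_deriv le_rfl)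

/-- Logarithmic cutoff: equal to `1` where `log (1 + ‖z‖²) ≤ c` and to `0` where
`c + L ≤ log (1 + ‖z‖²)`. Its Dirichlet energy is `O((c + L) / L²)`. -/
def logCutoff (c L : ℝ) (z : ℂ) : ℝ :=
  smoothTransition (1 - (log (1 + ‖z‖ ^ 2) - c) / L)

section LogCutoff

variable {c L : ℝ} {z : ℂ}

lemma contDiff_log_one_add_norm_sq {n : ℕ∞} : ContDiff ℝ n fun z : ℂ ↦ log (1 + ‖z‖ ^ 2) :=
  (contDiff_const.add (contDiff_norm_sq ℝ)).log fun z ↦ by positivity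

lemma contDiff_logCutoff {n : ℕ∞} : ContDiff ℝ n (logCutoff c L) :=
  smoothTransition.contDiff.comp
    (contDiff_const.sub ((contDiff_log_one_add_norm_sq.sub contDiff_const).div_const L))

lemma logCutoff_mem_Icc : logCutoff c L z ∈ Set.Icc 0 1 :=
  ⟨smoothTransition.nonneg _, smoothTransition.le_one _⟩

lemma logCutoff_eq_one (hL : 0 < L) (hz : log (1 + ‖z‖ ^ 2) ≤ c) : logCutoff c L z = 1 :=
  smoothTransition.one_of_one_le
    (le_sub_self_iff 1 |>.2 (div_nonpos_of_nonpos_of_nonneg (by linarith) hL.le))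

lemma logCutoff_eq_zero (hL : 0 < L) (hz : c + L ≤ log (1 + ‖z‖ ^ 2)) : logCutoff c L z = 0 :=
  smoothTransition.zero_of_nonpos (sub_nonpos.2 ((one_le_div hL).2 (by linarith)))

lemma support_logCutoff_subset (hL : 0 < L) :
    Function.support (logCutoff c L) ⊆ closedBall 0 √(exp (c + L)) := fun z hz ↦ by
  have h_log := not_le.1 fun h ↦ hz (logCutoff_eq_zero hL h)
  rw [Real.log_lt_iff_lt_exp (by positivity)] at h_log
  exact mem_closedBall_zero_iff.2 (Real.le_sqrt_of_sq_le (by linarith))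

lemma tsupport_logCutoff_subset (hL : 0 < L) :
    tsupport (logCutoff c L) ⊆ closedBall 0 √(exp (c + L)) :=
  closure_minimal (support_logCutoff_subset hL) isClosed_closedBall

lemma norm_fderiv_logCutoff_sq_le {C : ℝ} (hC : ∀ x, |deriv smoothTransition x| ≤ C) :
    ‖fderiv ℝ (logCutoff c L) z‖ ^ 2 ≤ 4 * C ^ 2 / L ^ 2 * (1 + ‖z‖ ^ 2)⁻¹ := by
  have h_log := (contDiff_log_one_add_norm_sq (n := 1)).differentiable one_ne_zero z
  have h_fderiv : HasFDerivAt (logCutoff c L) _ z :=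
    (smoothTransition.contDiff (n := 1)).differentiable one_ne_zero _ |>.hasDerivAt
      |>.comp_hasFDerivAt z (((h_log.hasFDerivAt.sub_const c).mul_const L⁻¹).const_sub 1)
  rw [h_fderiv.fderiv, norm_smul, norm_neg, norm_smul, mul_pow, mul_pow]
  calc _ ≤ C ^ 2 * (‖L⁻¹‖ ^ 2 * (4 * (1 + ‖z‖ ^ 2)⁻¹)) := by
        gcongr
        · exact hC _
        · exact norm_fderiv_log_one_add_norm_sq_sq_le z
    _ = _ := by
      rw [norm_inv, inv_pow, Real.norm_eq_abs, sq_abs]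
      ring

lemma integral_norm_fderiv_logCutoff_sq_le {C : ℝ} (hC : ∀ x, |deriv smoothTransition x| ≤ C)
    (hL : 0 < L) :
    ∫ z, ‖fderiv ℝ (logCutoff c L) z‖ ^ 2 ≤ 4 * C ^ 2 / L ^ 2 * (π * log (1 + exp (c + L))) := by
  have h_supp : Function.support (fun z ↦ ‖fderiv ℝ (logCutoff c L) z‖ ^ 2) ⊆
      closedBall 0 √(exp (c + L)) := fun z hz ↦ tsupport_logCutoff_subset hL
    (support_fderiv_subset ℝ fun h ↦ hz (by simp [h]))
  rw [← setIntegral_eq_integral_of_forall_compl_eq_zero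
    fun z hz ↦ Function.notMem_support.1 fun h ↦ hz (h_supp h)]
  have h_mono := setIntegral_mono (μ := volume) (s := closedBall 0 √(exp (c + L)))
    ((contDiff_logCutoff (n := 1)).continuous_fderiv one_ne_zero |>.norm.pow 2
      |>.continuousOn.integrableOn_compact (isCompact_closedBall _ _))
    (Continuous.continuousOn (by fun_prop (disch := intros; positivity))
      |>.integrableOn_compact (isCompact_closedBall _ _))
    fun z ↦ norm_fderiv_logCutoff_sq_le (c := c) (L := L) (z := z) hC
  rwa [integral_const_mul, integral_closedBall_inv_one_add_norm_sq (Real.sqrt_nonneg _),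
    Real.sq_sqrt (exp_nonneg _)] at h_mono

end LogCutoff

lemma exists_integral_norm_fderiv_logCutoff_sq_le {c ε : ℝ} (hc : 0 ≤ c) (hε : 0 < ε) :
    ∃ L > 0, ∫ z, ‖fderiv ℝ (logCutoff c L) z‖ ^ 2 ≤ ε := by
  obtain ⟨C, hC⟩ := exists_abs_deriv_smoothTransition_le
  have h_tendsto : Tendsto (fun L : ℝ ↦ 4 * C ^ 2 * π * (2 + c) / L) atTop (𝓝 0) :=
    tendsto_const_nhds.div_atTop tendsto_id
  obtain ⟨L, hLε, hL⟩ := ((h_tendsto.eventually_le_const hε).and (eventually_ge_atTop 1)).exists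
  have h_log : log (1 + exp (c + L)) ≤ (2 + c) * L := by
    calc log (1 + exp (c + L)) ≤ log (exp 1 * exp (c + L)) := by
          gcongr
          nlinarith [Real.add_one_le_exp 1, Real.one_le_exp (by linarith : 0 ≤ c + L)]
      _ = 1 + (c + L) := by rw [← Real.exp_add, Real.log_exp]
      _ ≤ (2 + c) * L := by nlinarith
  refine ⟨L, one_pos.trans_le hL, (integral_norm_fderiv_logCutoff_sq_le hC
    (one_pos.trans_le hL)).trans (le_trans ?_ hLε)⟩
  calc 4 * C ^ 2 / L ^ 2 * (π * log (1 + exp (c + L)))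
      ≤ 4 * C ^ 2 / L ^ 2 * (π * ((2 + c) * L)) := by gcongr
    _ = 4 * C ^ 2 * π * (2 + c) / L := by field_simp

lemma isParabolic_univ : IsParabolic Set.univ := fun S _ hS ε hε ↦ by
  obtain ⟨r, hr⟩ := hS.isBounded.exists_norm_le
  obtain ⟨L, hL, h_energy⟩ := exists_integral_norm_fderiv_logCutoff_sq_le
    (Real.log_nonneg (le_add_of_nonneg_right (sq_nonneg r))) hε
  refine ⟨_, contDiff_logCutoff (n := 1), (isCompact_closedBall _ _).of_isClosed_subset
    (isClosed_tsupport _) (tsupport_logCutoff_subset hL), Set.subset_univ _,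
    fun z ↦ logCutoff_mem_Icc, fun z hz ↦ logCutoff_eq_one hL ?_, h_energy⟩
  gcongr
  exact hr z hz

lemma integral_norm_fderiv_comp_smul_sub_sq (η : ℂ → ℝ) {s : ℝ} (hs : s ≠ 0) (p : ℂ) :
    ∫ z, ‖fderiv ℝ (fun z ↦ η (s • (z - p))) z‖ ^ 2 = ∫ z, ‖fderiv ℝ η z‖ ^ 2 := by
  have h_fderiv : ∀ z, ‖fderiv ℝ (fun z ↦ η (s • (z - p))) z‖ ^ 2 =
      s ^ 2 * ‖fderiv ℝ η (s • (z - p))‖ ^ 2 := fun z ↦ by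
    rw [fderiv_comp_sub p (f := fun z ↦ η (s • z)), fderiv_comp_smul, norm_smul, mul_pow,
      Real.norm_eq_abs, sq_abs]
  simp_rw [h_fderiv]
  rw [integral_const_mul, integral_sub_right_eq_self (fun z ↦ ‖fderiv ℝ η (s • z)‖ ^ 2),
    Measure.integral_comp_smul volume (fun z ↦ ‖fderiv ℝ η z‖ ^ 2), Complex.finrank_real_complex,
    abs_of_nonneg (by positivity), smul_eq_mul, mul_inv_cancel_left₀ (pow_ne_zero 2 hs)]

lemma exists_cutoff_ball_energy_le (p : ℂ) {r ε : ℝ} (hr : 0 < r) (hε : 0 < ε) :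
    ∃ χ : ℂ → ℝ, ContDiff ℝ 1 χ ∧ tsupport χ ⊆ closedBall p r ∧ (∀ z, χ z ∈ Set.Icc 0 1) ∧
      χ =ᶠ[𝓝 p] 1 ∧ ∫ z, ‖fderiv ℝ χ z‖ ^ 2 ≤ ε := by
  obtain ⟨η, h_smooth, h_compact, -, h_mem, h_one, h_energy⟩ :=
    isParabolic_univ (closedBall 0 1) (Set.subset_univ _) (isCompact_closedBall 0 1) ε hε
  obtain ⟨R, hR, h_supp⟩ := h_compact.isBounded.exists_pos_norm_le
  have h_cont : ContinuousAt (fun z ↦ (R / r) • (z - p)) p := by fun_prop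
  refine ⟨fun z ↦ η ((R / r) • (z - p)), by fun_prop, closure_minimal (fun z hz ↦ ?_)
    isClosed_closedBall, fun z ↦ h_mem _, ?_, ?_⟩
  · have h_norm := h_supp _ (subset_tsupport η hz)
    rw [norm_smul, Real.norm_of_nonneg (by positivity), div_mul_eq_mul_div, div_le_iff₀ hr]
      at h_norm
    exact mem_closedBall_iff_norm.2 (le_of_mul_le_mul_left h_norm hR)
  · filter_upwards [h_cont.preimage_mem_nhds (closedBall_mem_nhds _ one_pos)] with z hz
    exact h_one _ (by simpa using hz)
  · rwa [integral_norm_fderiv_comp_smul_sub_sq η (by positivity)]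

lemma integrable_norm_fderiv_sq {f : ℂ → ℝ} (hf : ContDiff ℝ 1 f) (hfc : HasCompactSupport f) :
    Integrable fun z ↦ ‖fderiv ℝ f z‖ ^ 2 := by
  have h_supp : HasCompactSupport fun z ↦ ‖fderiv ℝ f z‖ ^ 2 := by
    simpa only [Function.comp_def] using
      (hfc.fderiv ℝ).comp_left (g := fun L : ℂ →L[ℝ] ℝ ↦ ‖L‖ ^ 2) (by norm_num)
  exact ((hf.continuous_fderiv one_ne_zero).norm.pow 2).integrable_of_hasCompactSupport h_supp

lemma integral_norm_fderiv_mul_one_sub_sq_le {η χ : ℂ → ℝ} (hη : ContDiff ℝ 1 η)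
    (hχ : ContDiff ℝ 1 χ) (hηc : HasCompactSupport η) (hχc : HasCompactSupport χ)
    (hη₁ : ∀ z, η z ∈ Set.Icc 0 1) (hχ₁ : ∀ z, χ z ∈ Set.Icc 0 1) :
    ∫ z, ‖fderiv ℝ (fun z ↦ η z * (1 - χ z)) z‖ ^ 2 ≤
      2 * ((∫ z, ‖fderiv ℝ η z‖ ^ 2) + ∫ z, ‖fderiv ℝ χ z‖ ^ 2) := by
  have h_int := integrable_norm_fderiv_sq hη hηc
  have h_int' := integrable_norm_fderiv_sq hχ hχc
  rw [← integral_add h_int h_int', ← integral_const_mul]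
  refine integral_mono_of_nonneg (ae_of_all _ fun z ↦ sq_nonneg _)
    ((h_int.add h_int').const_mul 2) (ae_of_all _ fun z ↦ ?_)
  change _ ≤ 2 * (‖fderiv ℝ η z‖ ^ 2 + ‖fderiv ℝ χ z‖ ^ 2)
  obtain ⟨⟨hη₀, hη₁⟩, ⟨hχ₀, hχ₁⟩⟩ := And.intro (hη₁ z) (hχ₁ z)
  have h_fderiv := (hη.differentiable one_ne_zero z).hasFDerivAt.mul
    ((hχ.differentiable one_ne_zero z).hasFDerivAt.const_sub 1)
  have h_norm : ‖fderiv ℝ (fun z ↦ η z * (1 - χ z)) z‖ ≤ ‖fderiv ℝ χ z‖ + ‖fderiv ℝ η z‖ := by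
    rw [show fderiv ℝ (fun z ↦ η z * (1 - χ z)) z = _ from h_fderiv.fderiv]
    refine (norm_add_le _ _).trans ?_
    rw [norm_smul, norm_smul, norm_neg, Real.norm_of_nonneg hη₀,
      Real.norm_of_nonneg (sub_nonneg.2 hχ₁)]
    exact add_le_add (mul_le_of_le_one_left (norm_nonneg _) hη₁)
      (mul_le_of_le_one_left (norm_nonneg _) (by linarith))
  nlinarith [norm_nonneg (fderiv ℝ (fun z ↦ η z * (1 - χ z)) z),
    sq_nonneg (‖fderiv ℝ η z‖ - ‖fderiv ℝ χ z‖)]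

namespace IsParabolic

variable {D : Set ℂ}

lemma diff_singleton (hD : IsParabolic D) (p : ℂ) : IsParabolic (D \ {p}) := by
  intro S hSD hS ε hε
  obtain ⟨r, hr, hrS⟩ : ∃ r > 0, closedBall p r ⊆ Sᶜ :=
    nhds_basis_closedBall.mem_iff.1 (hS.isClosed.isOpen_compl.mem_nhds fun h ↦ (hSD h).2 rfl)
  obtain ⟨η, hη, hηc, hηD, hη₁, hηS, hη_energy⟩ :=
    hD S (hSD.trans Set.sdiff_subset) hS (ε / 4) (by positivity)
  obtain ⟨χ, hχ, hχr, hχ₁, hχp, hχ_energy⟩ := exists_cutoff_ball_energy_le p hr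
    (by positivity : 0 < ε / 4)
  have hχc : HasCompactSupport χ := (isCompact_closedBall p r).of_isClosed_subset
    (isClosed_tsupport _) hχr
  refine ⟨fun z ↦ η z * (1 - χ z), hη.mul (contDiff_const.sub hχ), hηc.mul_right, fun z hz ↦
    ⟨hηD (tsupport_mul_subset_left hz), ?_⟩, fun z ↦ ⟨?_, ?_⟩, fun z hz ↦ ?_, ?_⟩
  · rintro rfl
    refine notMem_tsupport_iff_eventuallyEq.2 ?_ hz
    filter_upwards [hχp] with x hx
    simp [hx]
  · exact mul_nonneg (hη₁ z).1 (sub_nonneg.2 (hχ₁ z).2)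
  · exact mul_le_one₀ (hη₁ z).2 (sub_nonneg.2 (hχ₁ z).2) (by linarith [(hχ₁ z).1])
  · simp [hηS z hz, image_eq_zero_of_notMem_tsupport fun h ↦ hrS (hχr h) hz]
  · linarith [integral_norm_fderiv_mul_one_sub_sq_le hη hχ hηc hχc hη₁ hχ₁]

lemma compl_of_finite {s : Set ℂ} (hs : s.Finite) : IsParabolic sᶜ := by
  induction s, hs using Set.Finite.induction_on with
  | empty => simpa using isParabolic_univ
  | @insert p s _ _ ih =>
    rw [← Set.union_singleton, Set.compl_union]
    exact ih.diff_singleton p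

end IsParabolic

section Vanishing

variable {D : Set ℂ} {F : ℂ → ℂ} {Φ η : ℂ → ℝ} {K : ℝ}

lemma sq_mul_le_two_mul_re_dzbar_add {z : ℂ} (hK : 0 ≤ K) (hF : DifferentiableAt ℝ F z)
    (hFΦ : dzbar F z = Φ z) (hΦ : 0 ≤ Φ z) (hFK : ‖F z‖ ^ 2 ≤ K * Φ z)
    (hη : DifferentiableAt ℝ η z) :
    η z ^ 2 * Φ z ≤ 2 * (dzbar (fun z ↦ (η z : ℂ) ^ 2 * F z) z).re +
      4 * K * ‖fderiv ℝ η z‖ ^ 2 := by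
  have h_coe := Complex.ofRealCLM.hasFDerivAt.comp z hη.hasFDerivAt
  set e : ℂ := dzbar (fun z ↦ η z) z
  have he : ‖e‖ ≤ ‖fderiv ℝ η z‖ := by
    refine (norm_dzbar_le_norm_fderiv _ z).trans ?_
    rw [show fderiv ℝ (fun z ↦ (η z : ℂ)) z = _ from h_coe.fderiv]
    exact (ContinuousLinearMap.opNorm_comp_le _ _).trans (by simp)
  have h_dzbar : dzbar (fun z ↦ (η z : ℂ) ^ 2 * F z) z =
      (η z ^ 2 * Φ z : ℝ) + 2 * (η z * e * F z) := by
    have h_diff : DifferentiableAt ℝ (fun z ↦ (η z : ℂ)) z := h_coe.differentiableAt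
    simp_rw [sq]
    rw [dzbar_mul (h_diff.fun_mul h_diff) hF, dzbar_mul h_diff h_diff, hFΦ]
    push_cast
    ring
  have h_amgm : |(2 * (η z * e * F z)).re| ≤ η z ^ 2 * Φ z / 2 + 2 * K * ‖e‖ ^ 2 := by
    refine (Complex.abs_re_le_norm _).trans (le_of_sq_le_sq ?_ (by positivity))
    simp only [norm_mul, Complex.norm_ofNat, Complex.norm_real, mul_pow, Real.norm_eq_abs, sq_abs]
    nlinarith [mul_le_mul_of_nonneg_left hFK (by positivity : 0 ≤ η z ^ 2 * ‖e‖ ^ 2),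
      sq_nonneg (η z ^ 2 * Φ z / 2 - 2 * K * ‖e‖ ^ 2)]
  have h_energy : K * ‖e‖ ^ 2 ≤ K * ‖fderiv ℝ η z‖ ^ 2 := by gcongr
  rw [h_dzbar, Complex.add_re, Complex.ofReal_re]
  linarith [(abs_le.1 h_amgm).1]

lemma setIntegral_le_of_cutoff {S : Set ℂ} (hS : IsCompact S) (hSD : S ⊆ D) (hK : 0 ≤ K)
    (hF : ∀ z ∈ D, ContDiffAt ℝ 1 F z) (hFΦ : ∀ z ∈ D, dzbar F z = Φ z)
    (hΦ : ∀ z ∈ D, 0 ≤ Φ z) (hΦ_cont : ContinuousOn Φ D)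
    (hFK : ∀ z ∈ D, ‖F z‖ ^ 2 ≤ K * Φ z) (hη : ContDiff ℝ 1 η) (hηc : HasCompactSupport η)
    (hηD : tsupport η ⊆ D) (hηS : ∀ z ∈ S, η z = 1) :
    ∫ z in S, Φ z ≤ 4 * K * ∫ z, ‖fderiv ℝ η z‖ ^ 2 := by
  set ψ : ℂ → ℂ := fun z ↦ (η z : ℂ) ^ 2 * F z
  have h_supp : tsupport ψ ⊆ tsupport η :=
    closure_mono fun z hz h ↦ hz (by simp only [ψ, h, Complex.ofReal_zero, ne_eq,
      OfNat.ofNat_ne_zero, not_false_eq_true, zero_pow, zero_mul])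
  have hψ : ContDiff ℝ 1 ψ := contDiff_of_forall_mem_tsupport fun z hz ↦
    ((Complex.ofRealCLM.contDiff.comp hη).contDiffAt.pow 2).mul (hF z (hηD (h_supp hz)))
  have hψc : HasCompactSupport ψ := hηc.of_isClosed_subset (isClosed_tsupport _) h_supp
  have h_int : Integrable (dzbar ψ) := (contDiff_dzbar hψ (zero_add 1).le).continuous
    |>.integrable_of_hasCompactSupport (hasCompactSupport_dzbar hψc)
  have h_int_majorant : Integrable fun z ↦ 2 * (dzbar ψ z).re + 4 * K * ‖fderiv ℝ η z‖ ^ 2 :=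
    (h_int.re.const_mul 2).add ((integrable_norm_fderiv_sq hη hηc).const_mul _)
  have h_le {z : ℂ} (hz : z ∈ D) := sq_mul_le_two_mul_re_dzbar_add hK
    ((hF z hz).differentiableAt one_ne_zero) (hFΦ z hz) (hΦ z hz) (hFK z hz)
    (hη.differentiable one_ne_zero z)
  have h_nonneg (z : ℂ) : 0 ≤ 2 * (dzbar ψ z).re + 4 * K * ‖fderiv ℝ η z‖ ^ 2 := by
    by_cases hz : z ∈ tsupport η
    · exact (mul_nonneg (sq_nonneg _) (hΦ z (hηD hz))).trans (h_le (hηD hz))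
    · rw [image_eq_zero_of_notMem_tsupport fun h ↦ hz (h_supp (tsupport_dzbar_subset ψ h))]
      simp only [Complex.zero_re]
      positivity
  calc ∫ z in S, Φ z ≤ ∫ z in S, 2 * (dzbar ψ z).re + 4 * K * ‖fderiv ℝ η z‖ ^ 2 := by
        refine setIntegral_mono_on ((hΦ_cont.mono hSD).integrableOn_compact hS)
          h_int_majorant.integrableOn hS.measurableSet fun z hz ↦ ?_
        simpa [hηS z hz] using h_le (hSD hz)
    _ ≤ ∫ z, 2 * (dzbar ψ z).re + 4 * K * ‖fderiv ℝ η z‖ ^ 2 :=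
      setIntegral_le_integral h_int_majorant (ae_of_all _ h_nonneg)
    _ = 4 * K * ∫ z, ‖fderiv ℝ η z‖ ^ 2 := by
      have h_re : ∫ z, RCLike.re (dzbar ψ z) = 0 := by
        rw [integral_re h_int, integral_dzbar_eq_zero hψ hψc, map_zero]
      rw [← RCLike.re_eq_complex_re, integral_add (h_int.re.const_mul 2)
        ((integrable_norm_fderiv_sq hη hηc).const_mul _), integral_const_mul, integral_const_mul,
        h_re, mul_zero, zero_add]

theorem IsParabolic.eqOn_zero_of_dzbar_eq (hD : IsParabolic D) (hD' : IsOpen D) (hK : 0 ≤ K)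
    (hF : ∀ z ∈ D, ContDiffAt ℝ 1 F z) (hFΦ : ∀ z ∈ D, dzbar F z = Φ z)
    (hΦ : ∀ z ∈ D, 0 ≤ Φ z) (hFK : ∀ z ∈ D, ‖F z‖ ^ 2 ≤ K * Φ z) : Set.EqOn Φ 0 D := by
  intro z₀ hz₀
  have hΦ_cont : ContinuousOn Φ D := by
    have h_re : ContinuousOn (fun z ↦ (dzbar F z).re) D := fun z hz ↦
      (Complex.continuous_re.continuousAt.comp
        (contDiffAt_dzbar (m := 0) (hF z hz) (zero_add 1).le).continuousAt).continuousWithinAt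
    exact h_re.congr fun z hz ↦ by simp only [hFΦ z hz, Complex.ofReal_re]
  obtain ⟨r, hr, hrD⟩ := nhds_basis_closedBall.mem_iff.1 (hD'.mem_nhds hz₀)
  have h_int := (hΦ_cont.mono hrD).integrableOn_compact (μ := volume) (isCompact_closedBall z₀ r)
  have h_nonneg : 0 ≤ᵐ[volume.restrict (closedBall z₀ r)] Φ :=
    (ae_restrict_mem measurableSet_closedBall).mono fun z hz ↦ hΦ z (hrD hz)
  have h_zero : ∫ z in closedBall z₀ r, Φ z = 0 := by
    refine le_antisymm (le_of_forall_pos_le_add fun ε hε ↦ ?_) (setIntegral_nonneg_of_ae_restrict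
      h_nonneg)
    obtain ⟨η, hη, hηc, hηD, -, hηS, h_energy⟩ := hD _ hrD (isCompact_closedBall z₀ r)
      (ε / (4 * K + 1)) (by positivity)
    calc _ ≤ 4 * K * ∫ z, ‖fderiv ℝ η z‖ ^ 2 := setIntegral_le_of_cutoff
          (isCompact_closedBall z₀ r) hrD hK hF hFΦ hΦ hΦ_cont hFK hη hηc hηD hηS
      _ ≤ (4 * K + 1) * (ε / (4 * K + 1)) := by gcongr; linarith
      _ = 0 + ε := by rw [zero_add, mul_div_cancel₀ _ (by positivity)]
  exact Measure.eqOn_open_of_ae_eq (ae_restrict_of_ae_restrict_of_subset ball_subset_closedBall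
    ((setIntegral_eq_zero_iff_of_nonneg_ae h_nonneg h_int).1 h_zero)) isOpen_ball
    (hΦ_cont.mono (ball_subset_closedBall.trans hrD)) continuousOn_const (mem_ball_self hr)

end Vanishing

/-! ### Solutions of the Liouville equation -/

/-- `U` is a `C²` solution of the Liouville equation `ΔU + e^U = 0` on `D`. -/
structure IsLiouvilleOn (D : Set ℂ) (U : ℂ → ℝ) : Prop where
  contDiffAt : ∀ z ∈ D, ContDiffAt ℝ 2 U z
  laplacian_add_exp : ∀ z ∈ D, Δ U z + exp (U z) = 0

/-- The expression `∂∂U - (∂U)² / 2`: for a solution of the Liouville equation it is the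
Schwarzian derivative of a developing map of the metric `e^U |dz|²`. -/
def liouvilleSchwarzian (U : ℂ → ℝ) (z : ℂ) : ℂ :=
  dz (dz fun z ↦ U z) z - dz (fun z ↦ U z) z ^ 2 / 2

/-- The conjugate gradient of `U - V`, weighted by the geometric mean of the densities `e^{-U}` and
`e^{-V}`. It is holomorphic when `U` and `V` solve the Liouville equation with equal
Schwarzians. -/
def weightedGradient (U V : ℂ → ℝ) (z : ℂ) : ℂ :=
  (exp (-(U z + V z) / 2) : ℝ) * conj (dz (fun z ↦ U z) z - dz (fun z ↦ V z) z)

lemma differentiableAt_ofReal {U : ℂ → ℝ} {z : ℂ} (hU : DifferentiableAt ℝ U z) :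
    DifferentiableAt ℝ (fun z ↦ (U z : ℂ)) z :=
  Complex.ofRealCLM.differentiableAt.comp z hU

lemma dzbar_ofReal {U : ℂ → ℝ} {z : ℂ} (hU : DifferentiableAt ℝ U z) :
    dzbar (fun z ↦ U z) z = conj (dz (fun z ↦ U z) z) := by
  simpa only [Complex.conj_ofReal] using dzbar_conj (differentiableAt_ofReal hU)

lemma dzbar_exp_neg_add_div_two {U V : ℂ → ℝ} {z : ℂ} (hU : DifferentiableAt ℝ U z)
    (hV : DifferentiableAt ℝ V z) :
    dzbar (fun z ↦ (exp (-(U z + V z) / 2) : ℝ)) z = (exp (-(U z + V z) / 2) : ℝ) *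
      (-1 / 2 * conj (dz (fun z ↦ U z) z + dz (fun z ↦ V z) z)) := by
  have h_add : DifferentiableAt ℝ (fun z ↦ (U z + V z : ℂ)) z :=
    (differentiableAt_ofReal hU).add (differentiableAt_ofReal hV)
  simp only [Complex.ofReal_exp, Complex.ofReal_div, Complex.ofReal_neg, Complex.ofReal_add,
    Complex.ofReal_ofNat]
  rw [dzbar_holomorphic_comp (g := fun w ↦ Complex.exp (-w / 2))
    ((hasDerivAt_id _).neg.div_const 2).cexp h_add,
    dzbar_add (differentiableAt_ofReal hU) (differentiableAt_ofReal hV), dzbar_ofReal hU,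
    dzbar_ofReal hV, map_add, mul_assoc]

lemma norm_weightedGradient (U V : ℂ → ℝ) (z : ℂ) : ‖weightedGradient U V z‖ =
    exp (-(U z + V z) / 2) * ‖dz (fun z ↦ U z) z - dz (fun z ↦ V z) z‖ := by
  rw [weightedGradient, norm_mul, Complex.norm_real, Real.norm_of_nonneg (exp_nonneg _),
    RCLike.norm_conj]

namespace IsLiouvilleOn

variable {D : Set ℂ} {U V : ℂ → ℝ} {z : ℂ}

lemma contDiffAt_ofReal (hU : IsLiouvilleOn D U) (hz : z ∈ D) :
    ContDiffAt ℝ 2 (fun z ↦ (U z : ℂ)) z :=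
  Complex.ofRealCLM.contDiff.contDiffAt.comp z (hU.contDiffAt z hz)

lemma dzbar_dz_coe (hU : IsLiouvilleOn D U) (hz : z ∈ D) :
    dzbar (dz fun z ↦ U z) z = -(exp (U z) : ℝ) / 4 := by
  rw [dzbar_dz_eq_laplacian_div_four (hU.contDiffAt_ofReal hz),
    show Δ (fun z ↦ (U z : ℂ)) z = (Δ U z : ℝ) from
      (hU.contDiffAt z hz).laplacian_CLM_comp_left (l := Complex.ofRealCLM),
    eq_neg_of_add_eq_zero_left (hU.laplacian_add_exp z hz), Complex.ofReal_neg]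

lemma contDiffAt_dz_coe (hD : IsOpen D) (hU : IsLiouvilleOn D U) (hz : z ∈ D) :
    ContDiffAt ℝ 2 (dz fun z ↦ U z) z :=
  contDiffAt_of_dzbar_eq hD (n := 2) (h := fun z ↦ -(exp (U z) : ℝ) / 4) (by norm_num)
    (fun z hz ↦ (contDiffAt_dz (m := 1) (hU.contDiffAt_ofReal hz)
      one_add_one_eq_two.le).differentiableAt one_ne_zero)
    (fun z hz ↦ ((Complex.ofRealCLM.contDiff.contDiffAt.comp z
      (hU.contDiffAt z hz).exp).neg).div_const 4)
    (fun z hz ↦ hU.dzbar_dz_coe hz) hz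

lemma contDiffAt_liouvilleSchwarzian (hD : IsOpen D) (hU : IsLiouvilleOn D U) (hz : z ∈ D) :
    ContDiffAt ℝ 1 (liouvilleSchwarzian U) z :=
  (contDiffAt_dz (hU.contDiffAt_dz_coe hD hz) one_add_one_eq_two.le).sub
    ((((hU.contDiffAt_dz_coe hD hz).of_le one_le_two).pow 2).div_const 2)

lemma dzbar_liouvilleSchwarzian (hD : IsOpen D) (hU : IsLiouvilleOn D U) (hz : z ∈ D) :
    dzbar (liouvilleSchwarzian U) z = 0 := by
  set p : ℂ → ℂ := dz fun z ↦ U z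
  have hp : ContDiffAt ℝ 2 p z := hU.contDiffAt_dz_coe hD hz
  have hp' : DifferentiableAt ℝ p z := hp.differentiableAt two_ne_zero
  have h_dzp : DifferentiableAt ℝ (dz p) z :=
    (contDiffAt_dz hp one_add_one_eq_two.le).differentiableAt one_ne_zero
  have h_eq : dzbar p =ᶠ[𝓝 z] fun z ↦ -(1 / 4) * Complex.exp (U z) := by
    filter_upwards [hD.mem_nhds hz] with x hx
    rw [hU.dzbar_dz_coe hx, Complex.ofReal_exp]
    ring
  have h_dzbar_dzp : dzbar (dz p) z = dzbar p z * p z := by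
    rw [dzbar_dz_comm hp, dz_congr h_eq, h_eq.eq_of_nhds]
    exact dz_holomorphic_comp (g := fun w ↦ -(1 / 4) * Complex.exp w)
      ((Complex.hasDerivAt_exp _).const_mul _)
      (differentiableAt_ofReal ((hU.contDiffAt z hz).differentiableAt two_ne_zero))
  have h_dzbar_sq : dzbar (fun z ↦ p z ^ 2 / 2) z = p z * dzbar p z :=
    dzbar_holomorphic_comp (g := fun w ↦ w ^ 2 / 2)
      (by simpa using (hasDerivAt_pow 2 (p z)).div_const 2) hp'
  change dzbar (fun z ↦ dz p z - p z ^ 2 / 2) z = 0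
  rw [dzbar_sub h_dzp (by fun_prop), h_dzbar_dzp, h_dzbar_sq, mul_comm, sub_self]

lemma contDiffAt_weightedGradient (hD : IsOpen D) (hU : IsLiouvilleOn D U)
    (hV : IsLiouvilleOn D V) (hz : z ∈ D) : ContDiffAt ℝ 1 (weightedGradient U V) z := by
  refine ContDiffAt.of_le (n := 2) (.mul ?_ ?_) one_le_two
  · exact Complex.ofRealCLM.contDiff.contDiffAt.comp z
      (((hU.contDiffAt z hz).add (hV.contDiffAt z hz)).neg.div_const 2).exp
  · exact Complex.conjCLE.contDiff.contDiffAt.comp z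
      ((hU.contDiffAt_dz_coe hD hz).sub (hV.contDiffAt_dz_coe hD hz))

lemma dzbar_weightedGradient (hD : IsOpen D) (hU : IsLiouvilleOn D U) (hV : IsLiouvilleOn D V)
    (hz : z ∈ D) : dzbar (weightedGradient U V) z = (exp (-(U z + V z) / 2) : ℝ) *
      conj (liouvilleSchwarzian U z - liouvilleSchwarzian V z) := by
  set p : ℂ → ℂ := dz fun z ↦ U z
  set q : ℂ → ℂ := dz fun z ↦ V z
  have hp : DifferentiableAt ℝ p z := (hU.contDiffAt_dz_coe hD hz).differentiableAt two_ne_zero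
  have hq : DifferentiableAt ℝ q z := (hV.contDiffAt_dz_coe hD hz).differentiableAt two_ne_zero
  have hU' := (hU.contDiffAt z hz).differentiableAt two_ne_zero
  have hV' := (hV.contDiffAt z hz).differentiableAt two_ne_zero
  have h_diff_m : DifferentiableAt ℝ (fun z ↦ ((exp (-(U z + V z) / 2) : ℝ) : ℂ)) z :=
    differentiableAt_ofReal (by fun_prop)
  have h_diff_conj : DifferentiableAt ℝ (fun z ↦ conj (p z - q z)) z :=
    Complex.conjCLE.differentiableAt.comp z (hp.sub hq)
  change dzbar (fun z ↦ (exp (-(U z + V z) / 2) : ℝ) * conj (p z - q z)) z =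
    (exp (-(U z + V z) / 2) : ℝ) * conj (dz p z - p z ^ 2 / 2 - (dz q z - q z ^ 2 / 2))
  rw [dzbar_mul h_diff_m h_diff_conj, dzbar_exp_neg_add_div_two hU' hV',
    dzbar_conj (hp.fun_sub hq), dz_sub hp hq]
  simp only [map_sub, map_add, map_div₀, map_pow, Complex.conj_ofNat]
  ring

theorem liouvilleSchwarzian_eqOn (hD : IsOpen D) (hD' : IsParabolic D) (hU : IsLiouvilleOn D U)
    (hV : IsLiouvilleOn D V) {K : ℝ} (hK : ∀ z ∈ D,
      exp (-(U z + V z) / 2) * ‖dz (fun z ↦ U z) z - dz (fun z ↦ V z) z‖ ^ 2 ≤ K) :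
    Set.EqOn (liouvilleSchwarzian U) (liouvilleSchwarzian V) D := by
  rcases D.eq_empty_or_nonempty with rfl | ⟨z₀, hz₀⟩
  · exact Set.eqOn_empty _ _
  have hK₀ : 0 ≤ K := (by positivity : (0 : ℝ) ≤ _).trans (hK z₀ hz₀)
  set Q : ℂ → ℂ := fun z ↦ liouvilleSchwarzian U z - liouvilleSchwarzian V z with hQ_def
  set Φ : ℂ → ℝ := fun z ↦ exp (-(U z + V z) / 2) * ‖Q z‖ ^ 2
  have hQ {z : ℂ} (hz : z ∈ D) : ContDiffAt ℝ 1 Q z :=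
    (hU.contDiffAt_liouvilleSchwarzian hD hz).sub (hV.contDiffAt_liouvilleSchwarzian hD hz)
  have h_dzbar_Q {z : ℂ} (hz : z ∈ D) : dzbar Q z = 0 := by
    rw [hQ_def, dzbar_sub
      ((hU.contDiffAt_liouvilleSchwarzian hD hz).differentiableAt one_ne_zero)
      ((hV.contDiffAt_liouvilleSchwarzian hD hz).differentiableAt one_ne_zero),
      hU.dzbar_liouvilleSchwarzian hD hz, hV.dzbar_liouvilleSchwarzian hD hz, sub_zero]
  have hΦ : Set.EqOn Φ 0 D := by
    refine hD'.eqOn_zero_of_dzbar_eq hD hK₀ (F := fun z ↦ Q z * weightedGradient U V z)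
      (fun z hz ↦ (hQ hz).mul (hU.contDiffAt_weightedGradient hD hV hz)) (fun z hz ↦ ?_)
      (fun z _ ↦ by positivity) fun z hz ↦ ?_
    · rw [dzbar_mul ((hQ hz).differentiableAt one_ne_zero)
        ((hU.contDiffAt_weightedGradient hD hV hz).differentiableAt one_ne_zero), h_dzbar_Q hz,
        hU.dzbar_weightedGradient hD hV hz, zero_mul, zero_add, mul_left_comm, Complex.mul_conj',
        Complex.ofReal_mul, Complex.ofReal_pow]
    · rw [norm_mul, mul_pow, norm_weightedGradient]
      calc _ = Φ z * (exp (-(U z + V z) / 2) *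
            ‖dz (fun z ↦ U z) z - dz (fun z ↦ V z) z‖ ^ 2) := by ring
        _ ≤ Φ z * K := mul_le_mul_of_nonneg_left (hK z hz) (by positivity)
        _ = K * Φ z := mul_comm _ _
  intro z hz
  have h_zero : Φ z = 0 := hΦ hz
  exact sub_eq_zero.1 (norm_eq_zero.1 (by simpa [Φ, (exp_pos _).ne'] using h_zero))

lemma differentiableOn_weightedGradient (hD : IsOpen D) (hU : IsLiouvilleOn D U)
    (hV : IsLiouvilleOn D V)
    (hUV : Set.EqOn (liouvilleSchwarzian U) (liouvilleSchwarzian V) D) :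
    DifferentiableOn ℂ (weightedGradient U V) D := fun z hz ↦
  (differentiableAt_of_dzbar_eq_zero
    ((hU.contDiffAt_weightedGradient hD hV hz).differentiableAt one_ne_zero) (by
      rw [hU.dzbar_weightedGradient hD hV hz, hUV hz, sub_self, map_zero, mul_zero]))
    |>.differentiableWithinAt

lemma eqOn_of_weightedGradient_eqOn_zero (hD : IsOpen D) (hU : IsLiouvilleOn D U)
    (hV : IsLiouvilleOn D V) (hUV : Set.EqOn (weightedGradient U V) 0 D) : Set.EqOn U V D := by
  intro z hz
  have h_dz : dz (fun z ↦ U z) =ᶠ[𝓝 z] dz fun z ↦ V z := by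
    filter_upwards [hD.mem_nhds hz] with x hx
    have h_mul := hUV hx
    rw [weightedGradient, Pi.zero_apply, mul_eq_zero_iff_left
      (Complex.ofReal_ne_zero.2 (exp_pos _).ne'), map_eq_zero, sub_eq_zero] at h_mul
    exact h_mul
  have h_exp := dzbar_congr h_dz
  rw [hU.dzbar_dz_coe hz, hV.dzbar_dz_coe hz] at h_exp
  rw [div_left_inj' (OfNat.ofNat_ne_zero 4), neg_inj, Complex.ofReal_inj, exp_eq_exp] at h_exp
  exact h_exp

end IsLiouvilleOn

/-! ### Conical solutions on the plane -/

lemma isBigO_one_principal_of_cocompact {X E : Type*} [TopologicalSpace X] [Norm E] {g : X → E}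
    {s : Set X} (hs : ∀ x, g =O[𝓝[s] x] fun _ ↦ (1 : ℝ))
    (hg : g =O[cocompact X ⊓ 𝓟 s] fun _ ↦ (1 : ℝ)) : g =O[𝓟 s] fun _ ↦ (1 : ℝ) := by
  obtain ⟨C, hC⟩ := hg.bound
  obtain ⟨t, ht, ht_bound⟩ := mem_cocompact.1 (eventually_inf_principal.1 hC)
  have h_compact : g =O[𝓟 (t ∩ s)] fun _ ↦ (1 : ℝ) := by
    refine ht.induction_on (p := fun t ↦ g =O[𝓟 (t ∩ s)] fun _ ↦ (1 : ℝ))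
      (isBigO_principal.2 ⟨0, by simp⟩)
      (fun t₁ t₂ h₁₂ h ↦ h.mono (principal_mono.2 (Set.inter_subset_inter_left s h₁₂)))
      (fun t₁ t₂ h₁ h₂ ↦ ?_) fun x _ ↦ ?_
    · rw [Set.union_inter_distrib_right, ← sup_principal]
      exact h₁.sup h₂
    · obtain ⟨K, hK⟩ := (hs x).bound
      refine ⟨_, mem_nhdsWithin_of_mem_nhds (eventually_nhdsWithin_iff.1 hK),
        isBigO_principal.2 ⟨K, fun y hy ↦ hy.1 hy.2⟩⟩
  obtain ⟨K, hK⟩ := isBigO_principal.1 h_compact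
  refine isBigO_principal.2 ⟨max C K, fun x hx ↦ ?_⟩
  by_cases hxt : x ∈ t
  · exact (hK x ⟨hxt, hx⟩).trans (by gcongr; exact le_max_right _ _)
  · exact (ht_bound hxt hx).trans (by gcongr; exact le_max_left _ _)

lemma isBigO_exp_of_tendsto_sub_mul_log {X : Type*} {l : Filter X} {f r : X → ℝ} {s L : ℝ}
    (hr : ∀ᶠ x in l, 0 < r x) (hf : Tendsto (fun x ↦ f x - s * log (r x)) l (𝓝 L)) :
    (fun x ↦ exp (f x)) =O[l] fun x ↦ r x ^ s := by
  refine ((hf.rexp.isBigO_one ℝ).mul (isBigO_refl (fun x ↦ r x ^ s) l)).congr' ?_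
    (.of_forall fun x ↦ one_mul _)
  filter_upwards [hr] with x hx
  rw [rpow_def_of_pos hx, ← exp_add]
  ring_nf

lemma isBigO_exp_neg_add_div_two {X : Type*} {l : Filter X} {f g r : X → ℝ} {s L M : ℝ}
    (hr : ∀ᶠ x in l, 0 < r x) (hf : Tendsto (fun x ↦ f x - s * log (r x)) l (𝓝 L))
    (hg : Tendsto (fun x ↦ g x - s * log (r x)) l (𝓝 M)) :
    (fun x ↦ exp (-(f x + g x) / 2)) =O[l] fun x ↦ r x ^ (-s) :=
  isBigO_exp_of_tendsto_sub_mul_log hr (L := -(L + M) / 2)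
    (((hf.add hg).neg.div_const 2).congr fun x ↦ by ring)

lemma tendsto_ofReal_sub {X : Type*} {l : Filter X} {f g h : X → ℝ} {L M : ℝ}
    (hf : Tendsto (fun x ↦ f x - h x) l (𝓝 L)) (hg : Tendsto (fun x ↦ g x - h x) l (𝓝 M)) :
    Tendsto (fun x ↦ (f x - g x : ℂ)) l (𝓝 (L - M : ℝ)) :=
  ((Complex.continuous_ofReal.tendsto _).comp (hf.sub hg)).congr fun x ↦ by simp

/-- `U` is the logarithm of the density of a metric `e^U |dz|²` of Gaussian curvature `1 / 2` on the
Riemann sphere, with conical singularities of order `α j` at the points `q j` and regular at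
infinity: there `e^U |dz|²` is comparable to `|z|⁻⁴ |dz|²`. -/
structure IsConicalSolution {ι : Type*} (q : ι → ℂ) (α : ι → ℝ) (U : ℂ → ℝ) : Prop
    extends IsLiouvilleOn (Set.range q)ᶜ U where
  tendsto_at : ∀ j, ∃ L, Tendsto (fun z ↦ U z - 2 * α j * log ‖z - q j‖) (𝓝[≠] q j) (𝓝 L)
  tendsto_cobounded : ∃ L, Tendsto (fun z ↦ U z - -4 * log ‖z‖) (Bornology.cobounded ℂ) (𝓝 L)

namespace IsLiouvilleOn

variable {D : Set ℂ} {U V : ℂ → ℝ} {z : ℂ}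

lemma dz_coe_sub (hU : IsLiouvilleOn D U) (hV : IsLiouvilleOn D V) (hz : z ∈ D) :
    dz (fun z ↦ (U z - V z : ℂ)) z = dz (fun z ↦ U z) z - dz (fun z ↦ V z) z :=
  dz_sub ((hU.contDiffAt_ofReal hz).differentiableAt two_ne_zero)
    ((hV.contDiffAt_ofReal hz).differentiableAt two_ne_zero)

lemma dzbar_dz_coe_sub (hD : IsOpen D) (hU : IsLiouvilleOn D U) (hV : IsLiouvilleOn D V)
    (hz : z ∈ D) : dzbar (dz fun z ↦ (U z - V z : ℂ)) z = ((exp (V z) - exp (U z)) / 4 : ℝ) := by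
  rw [dzbar_congr (g := fun z ↦ dz (fun z ↦ U z) z - dz (fun z ↦ V z) z)
      (by filter_upwards [hD.mem_nhds hz] with x hx using hU.dz_coe_sub hV hx),
    dzbar_sub ((hU.contDiffAt_dz_coe hD hz).differentiableAt two_ne_zero)
      ((hV.contDiffAt_dz_coe hD hz).differentiableAt two_ne_zero),
    hU.dzbar_dz_coe hz, hV.dzbar_dz_coe hz]
  push_cast
  ring

lemma dzbar_dz_coe_sub_isBigO (hD : IsOpen D) (hU : IsLiouvilleOn D U) (hV : IsLiouvilleOn D V)
    {l : Filter ℂ} (hl : D ∈ l) {r : ℂ → ℝ} (hUr : (fun z ↦ exp (U z)) =O[l] r)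
    (hVr : (fun z ↦ exp (V z)) =O[l] r) : dzbar (dz fun z ↦ (U z - V z : ℂ)) =O[l] r := by
  refine .trans (.of_bound 1 ?_) (hVr.sub hUr)
  filter_upwards [hl] with z hz
  rw [hU.dzbar_dz_coe_sub hD hV hz, Complex.norm_real, norm_div, Real.norm_ofNat, one_mul]
  exact div_le_self (norm_nonneg _) (by norm_num)

end IsLiouvilleOn

section Filters

variable {ι E : Type*} [NormedAddCommGroup E]

lemma eventually_norm_sub_pos_nhdsNE (x : E) : ∀ᶠ y in 𝓝[≠] x, 0 < ‖y - x‖ :=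
  eventually_mem_nhdsWithin.mono fun _ hy ↦ norm_sub_pos_iff.2 hy

lemma eventually_norm_pos_cobounded : ∀ᶠ x in Bornology.cobounded E, 0 < ‖x‖ :=
  tendsto_norm_cobounded_atTop.eventually_gt_atTop 0

variable [Finite ι] {q : ι → E}

lemma isOpen_compl_range : IsOpen (Set.range q)ᶜ := (Set.finite_range q).isClosed.isOpen_compl

lemma compl_range_mem_nhdsNE (x : E) : ∀ᶠ y in 𝓝[≠] x, y ∈ (Set.range q)ᶜ :=
  nhdsNE_le_cofinite _ (Set.finite_range q).compl_mem_cofinite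

lemma compl_range_mem_cobounded : ∀ᶠ x in Bornology.cobounded E, x ∈ (Set.range q)ᶜ :=
  Bornology.le_cofinite E (Set.finite_range q).compl_mem_cofinite

end Filters

namespace IsConicalSolution

variable {ι : Type*} {q : ι → ℂ} {α : ι → ℝ} {U V : ℂ → ℝ}

lemma exp_neg_add_div_two_isBigO (hU : IsConicalSolution q α U) (hV : IsConicalSolution q α V)
    (j : ι) : (fun z ↦ exp (-(U z + V z) / 2)) =O[𝓝[≠] q j] fun z ↦ ‖z - q j‖ ^ (-(2 * α j)) := by
  obtain ⟨L, hL⟩ := hU.tendsto_at j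
  obtain ⟨M, hM⟩ := hV.tendsto_at j
  exact isBigO_exp_neg_add_div_two (eventually_norm_sub_pos_nhdsNE (q j)) hL hM

lemma exp_neg_add_div_two_isBigO_cobounded (hU : IsConicalSolution q α U)
    (hV : IsConicalSolution q α V) :
    (fun z ↦ exp (-(U z + V z) / 2)) =O[Bornology.cobounded ℂ] fun z ↦ z ^ 4 := by
  obtain ⟨L, hL⟩ := hU.tendsto_cobounded
  obtain ⟨M, hM⟩ := hV.tendsto_cobounded
  refine (isBigO_exp_neg_add_div_two eventually_norm_pos_cobounded hL hM).trans
    (.of_bound 1 (.of_forall fun z ↦ ?_))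
  rw [neg_neg, rpow_ofNat, norm_pow, norm_norm, norm_pow, one_mul]

variable [Finite ι]

lemma dz_sub_isBigO (hU : IsConicalSolution q α U) (hV : IsConicalSolution q α V) {j : ι}
    (hα : α j ∈ Set.Ioc (-1) 0) :
    (fun z ↦ dz (fun z ↦ U z) z - dz (fun z ↦ V z) z) =O[𝓝[≠] q j] fun z ↦ ‖z - q j‖ ^ α j := by
  obtain ⟨L, hL⟩ := hU.tendsto_at j
  obtain ⟨M, hM⟩ := hV.tendsto_at j
  have h_pos := eventually_norm_sub_pos_nhdsNE (q j)
  have h_dzbar_dz := hU.dzbar_dz_coe_sub_isBigO isOpen_compl_range hV.toIsLiouvilleOn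
    (compl_range_mem_nhdsNE (q j)) (isBigO_exp_of_tendsto_sub_mul_log h_pos hL)
    (isBigO_exp_of_tendsto_sub_mul_log h_pos hM)
  have h_dz : dz (fun z ↦ (U z - V z : ℂ)) =O[𝓝[≠] q j] fun z ↦ ‖z - q j‖ ^ (-(-(2 * α j) / 2)) :=
    dz_isBigO_of_dzbar_dz_isBigO (by linarith [hα.2]) (by linarith [hα.1])
      (tendsto_ofReal_sub hL hM)
      ((compl_range_mem_nhdsNE (q j)).mono fun z hz ↦
        (hU.contDiffAt_ofReal hz).sub (hV.contDiffAt_ofReal hz))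
      (by simpa only [neg_neg] using h_dzbar_dz)
  exact h_dz.congr' ((compl_range_mem_nhdsNE (q j)).mono fun z hz ↦
    hU.dz_coe_sub hV.toIsLiouvilleOn hz) (.of_forall fun z ↦ by ring_nf)

lemma dz_sub_isBigO_cobounded (hU : IsConicalSolution q α U) (hV : IsConicalSolution q α V) :
    (fun z ↦ dz (fun z ↦ U z) z - dz (fun z ↦ V z) z) =O[Bornology.cobounded ℂ]
      fun z ↦ (z ^ 2)⁻¹ := by
  obtain ⟨L, hL⟩ := hU.tendsto_cobounded
  obtain ⟨M, hM⟩ := hV.tendsto_cobounded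
  have h_rpow (z : ℂ) : ‖‖z‖ ^ (-4 : ℝ)‖ = ‖(z ^ 4)⁻¹‖ := by
    rw [norm_inv, norm_pow, Real.norm_of_nonneg (by positivity), rpow_neg (norm_nonneg _),
      rpow_ofNat]
  have h_dz := dz_isBigO_cobounded_of_dzbar_dz_isBigO (tendsto_ofReal_sub hL hM)
    (compl_range_mem_cobounded.mono fun z hz ↦
      (hU.contDiffAt_ofReal hz).sub (hV.contDiffAt_ofReal hz))
    ((hU.dzbar_dz_coe_sub_isBigO isOpen_compl_range hV.toIsLiouvilleOn compl_range_mem_cobounded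
      (isBigO_exp_of_tendsto_sub_mul_log eventually_norm_pos_cobounded hL)
      (isBigO_exp_of_tendsto_sub_mul_log eventually_norm_pos_cobounded hM)).trans
      (.of_bound 1 (.of_forall fun z ↦ by rw [one_mul, h_rpow])))
  exact h_dz.congr' (compl_range_mem_cobounded.mono fun z hz ↦
    hU.dz_coe_sub hV.toIsLiouvilleOn hz) .rfl

lemma weightedGradient_isBigO (hU : IsConicalSolution q α U) (hV : IsConicalSolution q α V)
    {j : ι} (hα : α j ∈ Set.Ioc (-1) 0) :
    weightedGradient U V =O[𝓝[≠] q j] fun z ↦ ‖z - q j‖ ^ (-α j) := by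
  refine isBigO_norm_left.1 (((hU.exp_neg_add_div_two_isBigO hV j).mul
    (hU.dz_sub_isBigO hV hα).norm_left).congr' (.of_forall fun z ↦
      (norm_weightedGradient U V z).symm) ?_)
  filter_upwards [eventually_norm_sub_pos_nhdsNE (q j)] with z hz
  rw [← rpow_add hz]
  ring_nf

lemma weightedGradient_isBigO_cobounded (hU : IsConicalSolution q α U)
    (hV : IsConicalSolution q α V) :
    weightedGradient U V =O[Bornology.cobounded ℂ] fun z ↦ z ^ 2 := by
  refine isBigO_norm_left.1 (((hU.exp_neg_add_div_two_isBigO_cobounded hV).norm_right.mul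
    (hU.dz_sub_isBigO_cobounded hV).norm_norm).congr' (.of_forall fun z ↦
      (norm_weightedGradient U V z).symm) ?_).of_norm_right
  filter_upwards [eventually_norm_pos_cobounded] with z hz
  rw [norm_pow, norm_inv, norm_pow]
  field_simp

lemma weightedGradient_mul_dz_sub_isBigO_one (hU : IsConicalSolution q α U)
    (hV : IsConicalSolution q α V) (hα : ∀ j, α j ∈ Set.Ioc (-1) 0) :
    (fun z ↦ weightedGradient U V z * (dz (fun z ↦ U z) z - dz (fun z ↦ V z) z))
      =O[𝓟 (Set.range q)ᶜ] fun _ ↦ (1 : ℝ) := by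
  refine isBigO_one_principal_of_cocompact (fun z ↦ ?_) ?_
  · by_cases hz : z ∈ (Set.range q)ᶜ
    · have h_cont := (hU.contDiffAt_weightedGradient isOpen_compl_range hV.toIsLiouvilleOn
        hz).continuousAt.mul ((hU.contDiffAt_dz_coe isOpen_compl_range hz).continuousAt.sub
        (hV.contDiffAt_dz_coe isOpen_compl_range hz).continuousAt)
      exact (h_cont.tendsto.mono_left nhdsWithin_le_nhds).isBigO_one ℝ
    · obtain ⟨j, rfl⟩ := Set.notMem_compl_iff.1 hz
      refine (((hU.weightedGradient_isBigO hV (hα j)).mul (hU.dz_sub_isBigO hV (hα j))).congr' .rfl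
        ?_).mono (nhdsWithin_mono _ (Set.compl_subset_compl.2
          (Set.singleton_subset_iff.2 (Set.mem_range_self j))))
      filter_upwards [eventually_norm_sub_pos_nhdsNE (q j)] with z hz
      rw [← rpow_add hz, neg_add_cancel, rpow_zero]
  · rw [← Metric.cobounded_eq_cocompact]
    refine (((hU.weightedGradient_isBigO_cobounded hV).mul
      (hU.dz_sub_isBigO_cobounded hV)).norm_right.congr' .rfl ?_).mono inf_le_left
    filter_upwards [eventually_norm_pos_cobounded] with z hz
    rw [mul_inv_cancel₀ (pow_ne_zero 2 (norm_pos_iff.1 hz)), norm_one]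

lemma exists_exp_mul_norm_dz_sub_sq_le (hU : IsConicalSolution q α U)
    (hV : IsConicalSolution q α V) (hα : ∀ j, α j ∈ Set.Ioc (-1) 0) :
    ∃ K, ∀ z ∈ (Set.range q)ᶜ,
      exp (-(U z + V z) / 2) * ‖dz (fun z ↦ U z) z - dz (fun z ↦ V z) z‖ ^ 2 ≤ K := by
  obtain ⟨K, hK⟩ := isBigO_principal.1 (hU.weightedGradient_mul_dz_sub_isBigO_one hV hα)
  refine ⟨K, fun z hz ↦ ?_⟩
  simpa only [norm_mul, norm_weightedGradient, norm_one, mul_one, mul_assoc, ← sq] using hK z hz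

end IsConicalSolution

/-! ### Uniqueness of conical solutions -/

theorem eq_zero_of_isLittleO_pow_card (s : Finset ℂ) {f : ℂ → ℂ} (hf : Differentiable ℂ f)
    (hs : ∀ a ∈ s, f a = 0) (hfs : f =o[Bornology.cobounded ℂ] fun z ↦ z ^ s.card) : f = 0 := by
  induction s using Finset.induction_on generalizing f with
  | empty =>
    simp only [Finset.card_empty, pow_zero, isLittleO_one_iff, Metric.cobounded_eq_cocompact] at hfs
    exact funext (hf.apply_eq_of_tendsto_cocompact · hfs)
  | insert a s ha ih =>
    have h_factor (z : ℂ) : f z = (z - a) * dslope f a z := by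
      rw [← smul_eq_mul, sub_smul_dslope, hs a (Finset.mem_insert_self a s), sub_zero]
    have h_sub : (fun z : ℂ ↦ z) =O[Bornology.cobounded ℂ] fun z ↦ z - a :=
      (isLittleO_const_id_cobounded a).right_isBigO_sub
    suffices h : dslope f a = 0 by
      funext z
      simp [h_factor, h]
    refine ih (differentiableOn_univ.1 ((Complex.differentiableOn_dslope univ_mem).2
      hf.differentiableOn)) (fun b hb ↦ ?_) ?_
    · have hab : b - a ≠ 0 := sub_ne_zero.2 (ne_of_mem_of_not_mem hb ha)
      exact (mul_eq_zero_iff_left hab).1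
        ((h_factor b).symm.trans (hs b (Finset.mem_insert_of_mem hb)))
    · have h_mul : (fun z ↦ z * dslope f a z) =o[Bornology.cobounded ℂ] fun z ↦ z * z ^ s.card := by
        simp only [← pow_succ', ← Finset.card_insert_of_notMem ha]
        exact ((h_sub.mul (isBigO_refl _ _)).congr_right fun z ↦ (h_factor z).symm).trans_isLittleO
          hfs
      refine ((isBigO_refl (·⁻¹) _).mul_isLittleO h_mul).congr' ?_ ?_ <;>
        filter_upwards [eventually_norm_pos_cobounded] with z hz using
          inv_mul_cancel_left₀ (norm_pos_iff.1 hz) _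

lemma differentiable_indicator_compl {s : Set ℂ} (hs : s.Finite) {f : ℂ → ℂ}
    (hf : DifferentiableOn ℂ f sᶜ) (hf₀ : ∀ a ∈ s, Tendsto f (𝓝[≠] a) (𝓝 0)) :
    Differentiable ℂ (sᶜ.indicator f) := by
  have h_off {z : ℂ} (hz : z ∈ sᶜ) : DifferentiableAt ℂ (sᶜ.indicator f) z :=
    (hf.differentiableAt (hs.isClosed.isOpen_compl.mem_nhds hz)).congr_of_eventuallyEq
      (eventually_of_mem (hs.isClosed.isOpen_compl.mem_nhds hz) fun x hx ↦
        Set.indicator_of_mem hx f)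
  intro a
  by_cases ha : a ∈ sᶜ
  · exact h_off ha
  have h_mem : ∀ᶠ z in 𝓝[≠] a, z ∈ sᶜ := nhdsNE_le_cofinite a hs.compl_mem_cofinite
  refine (Complex.analyticAt_of_differentiable_on_punctured_nhds_of_continuousAt
    (h_mem.mono fun z hz ↦ h_off hz) ?_).differentiableAt
  rw [continuousAt_iff_punctured_nhds, Set.indicator_of_notMem ha]
  exact (hf₀ a (Set.notMem_compl_iff.1 ha)).congr'
    (h_mem.mono fun z hz ↦ (Set.indicator_of_mem hz f).symm)

theorem IsConicalSolution.eqOn {ι : Type*} [Fintype ι] {q : ι → ℂ} {α : ι → ℝ} {U V : ℂ → ℝ}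
    (hι : 3 ≤ Fintype.card ι) (hq : Function.Injective q) (hα : ∀ j, α j ∈ Set.Ioo (-1) 0)
    (hU : IsConicalSolution q α U) (hV : IsConicalSolution q α V) :
    Set.EqOn U V (Set.range q)ᶜ := by
  have hα' (j : ι) : α j ∈ Set.Ioc (-1) 0 := Set.Ioo_subset_Ioc_self (hα j)
  obtain ⟨K, hK⟩ := hU.exists_exp_mul_norm_dz_sub_sq_le hV hα'
  have h_schwarzian := hU.liouvilleSchwarzian_eqOn isOpen_compl_range
    (.compl_of_finite (Set.finite_range q)) hV.toIsLiouvilleOn hK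
  have h_vanish : ∀ a ∈ Set.range q, Tendsto (weightedGradient U V) (𝓝[≠] a) (𝓝 0) := by
    rintro _ ⟨j, rfl⟩
    refine (hU.weightedGradient_isBigO hV (hα' j)).trans_tendsto ?_
    have h_rpow : ContinuousAt (fun z ↦ ‖z - q j‖ ^ (-α j)) (q j) :=
      (by fun_prop : ContinuousAt (fun z ↦ ‖z - q j‖) (q j)).rpow_const
        (.inr (neg_nonneg.2 (hα' j).2))
    simpa [zero_rpow (neg_ne_zero.2 (hα j).2.ne)] using
      h_rpow.tendsto.mono_left (nhdsWithin_le_nhds (s := {q j}ᶜ))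
  have h_entire := differentiable_indicator_compl (Set.finite_range q)
    (hU.differentiableOn_weightedGradient isOpen_compl_range hV.toIsLiouvilleOn h_schwarzian)
    h_vanish
  have h_growth : (Set.range q)ᶜ.indicator (weightedGradient U V) =o[Bornology.cobounded ℂ]
      fun z ↦ z ^ (Finset.univ.map ⟨q, hq⟩).card := by
    rw [Finset.card_map, Finset.card_univ]
    exact ((hU.weightedGradient_isBigO_cobounded hV).congr' (compl_range_mem_cobounded.mono
      fun z hz ↦ (Set.indicator_of_mem hz _).symm) .rfl).trans_isLittleO
      (isLittleO_pow_pow_cobounded_of_lt hι)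
  have h_zero := eq_zero_of_isLittleO_pow_card _ h_entire (by simp) h_growth
  refine hU.eqOn_of_weightedGradient_eqOn_zero isOpen_compl_range hV.toIsLiouvilleOn fun z hz ↦ ?_
  rw [← Set.indicator_of_mem hz (weightedGradient U V), h_zero]

/-! ### Transfer to the Euclidean plane -/

lemma laplacian_comp_linearIsometryEquiv {E F G : Type*} [NormedAddCommGroup E]
    [InnerProductSpace ℝ E] [FiniteDimensional ℝ E] [NormedAddCommGroup F] [InnerProductSpace ℝ F]
    [FiniteDimensional ℝ F] [NormedAddCommGroup G] [NormedSpace ℝ G] (e : E ≃ₗᵢ[ℝ] F) (f : F → G)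
    (x : E) : Δ (fun y ↦ f (e y)) x = Δ f (e x) := by
  have h_comp := e.toContinuousLinearEquiv.iteratedFDerivWithin_comp_right f uniqueDiffOn_univ
    (Set.mem_univ (e x)) 2
  simp only [Set.preimage_univ, iteratedFDerivWithin_univ] at h_comp
  simp only [InnerProductSpace.laplacian_eq_iteratedFDeriv_orthonormalBasis _
      (stdOrthonormalBasis ℝ E), InnerProductSpace.laplacian_eq_iteratedFDeriv_orthonormalBasis f
      ((stdOrthonormalBasis ℝ E).map e)]
  refine Finset.sum_congr rfl fun i _ ↦ ?_
  have h_map : e ∘ ![stdOrthonormalBasis ℝ E i, stdOrthonormalBasis ℝ E i] =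
      ![(stdOrthonormalBasis ℝ E).map e i, (stdOrthonormalBasis ℝ E).map e i] := by
    ext k
    fin_cases k <;> rfl
  rw [← h_map]
  exact congr($h_comp _)

lemma lap_eq_laplacian {u : Pl → ℝ} {x : Pl} (hu : ContDiffAt ℝ 2 u x) : lap u x = Δ u x := by
  have h_fderiv : DifferentiableAt ℝ (fderiv ℝ u) x :=
    (hu.fderiv_right (m := 1) (by norm_num)).differentiableAt one_ne_zero
  rw [InnerProductSpace.laplacian_eq_iteratedFDeriv_orthonormalBasis u
    (EuclideanSpace.basisFun (Fin 2) ℝ)]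
  refine Finset.sum_congr rfl fun i _ ↦ ?_
  rw [fderiv_clm_apply h_fderiv (differentiableAt_const _)]
  simp [iteratedFDeriv_two_apply]

lemma tendsto_two_mul_log_one_add_norm_sq_sub (E : Type*) [NormedAddCommGroup E] :
    Tendsto (fun x : E ↦ 2 * log (1 + ‖x‖ ^ 2) - 4 * log ‖x‖) (Bornology.cobounded E) (𝓝 0) := by
  have h_inv : Tendsto (fun x : E ↦ 2 * log ((‖x‖ ^ 2)⁻¹ + 1)) (Bornology.cobounded E) (𝓝 0) := by
    have h_lim : Tendsto (fun x : E ↦ (‖x‖ ^ 2)⁻¹ + 1) (Bornology.cobounded E) (𝓝 (0 + 1)) :=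
      ((tendsto_pow_atTop two_ne_zero).comp
        tendsto_norm_cobounded_atTop).inv_tendsto_atTop.add_const 1
    simpa using (h_lim.log (by norm_num)).const_mul 2
  refine h_inv.congr' ?_
  filter_upwards [eventually_norm_pos_cobounded] with x hx
  rw [show 1 + ‖x‖ ^ 2 = ((‖x‖ ^ 2)⁻¹ + 1) * ‖x‖ ^ 2 by field_simp,
    log_mul (by positivity) (by positivity), log_pow]
  push_cast
  ring

namespace PolySol

variable {N : ℕ} {q : Fin N → Pl} {α : Fin N → ℝ} {ρ : ℝ} {u : Pl → ℝ}

theorem isConicalSolution (hu : PolySol N q α ρ u) (e : ℂ ≃ₗᵢ[ℝ] Pl) :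
    IsConicalSolution (fun j ↦ e.symm (q j)) α (fun z ↦ u (e z)) := by
  obtain ⟨h_contDiff, h_lap, h_cone, -, L, hL⟩ := hu
  have h_mem {z : ℂ} (hz : z ∈ (Set.range fun j ↦ e.symm (q j))ᶜ) : e z ∈ (Set.range q)ᶜ := by
    rintro ⟨j, hj⟩
    exact hz ⟨j, by simp [hj]⟩
  have h_contDiffAt {z : ℂ} (hz : z ∈ (Set.range fun j ↦ e.symm (q j))ᶜ) :
      ContDiffAt ℝ 2 u (e z) :=
    (h_contDiff (e z) (h_mem hz)).contDiffAt (isOpen_compl_range.mem_nhds (h_mem hz))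
  refine ⟨⟨fun z hz ↦ (h_contDiffAt hz).comp z e.contDiff.contDiffAt, fun z hz ↦ ?_⟩,
    fun j ↦ ?_, L, ?_⟩
  · rw [laplacian_comp_linearIsometryEquiv, ← lap_eq_laplacian (h_contDiffAt hz)]
    exact h_lap (e z) (h_mem hz)
  · obtain ⟨L, hL⟩ := h_cone j
    have h_tendsto : Tendsto e (𝓝[≠] e.symm (q j)) (𝓝[(Set.range q)ᶜ] q j) :=
      tendsto_nhdsWithin_iff.2
        ⟨(e.continuous.tendsto' _ _ (e.apply_symm_apply _)).mono_left nhdsWithin_le_nhds,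
          (compl_range_mem_nhdsNE _).mono fun z ↦ h_mem⟩
    refine ⟨L, (hL.comp h_tendsto).congr fun z ↦ ?_⟩
    rw [Function.comp_apply, ← e.norm_map (z - e.symm (q j)), map_sub, e.apply_symm_apply]
  · have h_tendsto : Tendsto e (Bornology.cobounded ℂ) (Bornology.cobounded Pl) := by
      simpa [← tendsto_norm_atTop_iff_cobounded] using tendsto_norm_cobounded_atTop (E := ℂ)
    refine (((hL.comp h_tendsto).sub (tendsto_two_mul_log_one_add_norm_sq_sub ℂ)).congr
      fun z ↦ ?_).trans_eq ?_
    · simp only [Function.comp_apply, e.norm_map]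
      ring
    · simp

end PolySol

/-- Uniqueness of spherical convex polytopes, planar form (Theorem 1.7(ii)). -/
theorem uniqueness_convex_polytopes (N : ℕ) (hN : 3 ≤ N) (q : Fin N → Pl)
    (hq : Function.Injective q) (al : Fin N → ℝ)
    (hal : ∀ j, al j ∈ Set.Ioo (-1 : ℝ) 0) (hsum : -2 < ∑ j, al j)
    (ρ : ℝ) (hρ : ρ = 4*π*(2 + ∑ j, al j))
    (u1 u2 : Pl → ℝ) (h1 : PolySol N q al ρ u1) (h2 : PolySol N q al ρ u2) :
    Set.EqOn u1 u2 (Set.range q)ᶜ := by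
  intro x hx
  let e := Complex.orthonormalBasisOneI.repr
  have h_pullback := (h1.isConicalSolution e).eqOn (by simpa) (e.symm.injective.comp hq) hal
    (h2.isConicalSolution e)
  have hx' : e.symm x ∈ (Set.range fun j ↦ e.symm (q j))ᶜ := by
    simpa using hx
  simpa using h_pullback hx'
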